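/- (Generalized quantum Capelli identity, skew-symmetric form.) Let R be a skew-invertible Hecke symmetry with parameter q such that j_q ≠ 0 for 2 ≤ j ≤ k, let M and D be N×N matrices with entries in a unital associative ℂ-algebra 𝒜 satisfying the Reflection Equation R M₁ R M₁ = M₁ R M₁ R, the relation R⁻¹ D₁ R⁻¹ D₁ = D₁ R⁻¹ D₁ R⁻¹, and the permutation relations D₁ R M₁ = R M₁ R⁻¹ D₁ R⁻¹ + I, and set L := M D. Then for every k ≥ 1, as an identity in 𝒜: ⟨A^(k) L_{1̄} (L_{2̄} + q·I) ⋯ (L_{k̄} + q^{k−1}·(k−1)_q·I)⟩_{1…k} = q^{k(k−1)} ⟨A^(k) M_{1̄} ⋯ M_{k̄} D_{k̄} ⋯ D_{1̄}⟩_{1…k}. -/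

import Mathlib

open Matrix BigOperators

noncomputable section

/-- An `N² × N²` complex matrix, viewed as an operator on `ℂ^N ⊗ ℂ^N`. -/
abbrev RMat (N : ℕ) := Matrix (Fin N × Fin N) (Fin N × Fin N) ℂ

/-- A matrix on the `k`-th tensor power of `ℂ^N`, with entries in `A`. -/
abbrev TMat (N k : ℕ) (A : Type _) := Matrix (Fin k → Fin N) (Fin k → Fin N) A

/-- The `q`-number `j_q = (q^j - q^{-j})/(q - q^{-1})`. -/
def qNum (q : ℂ) (j : ℕ) : ℂ := (q ^ j - q⁻¹ ^ j) / (q - q⁻¹)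

/-- Embedding of an `N²×N²` matrix `R` into the `k`-th tensor power,
acting in the (0-based) tensor factors `i` and `i+1`.  The paper's `R_i`
(1-based) is `embR k R (i-1)`. -/
def embR {N : ℕ} (k : ℕ) (R : RMat N) (i : ℕ) : TMat N k ℂ := fun f g =>
  if h : i + 1 < k then
    if ∀ j : Fin k, j.val ≠ i → j.val ≠ i + 1 → f j = g j then
      R (f ⟨i, Nat.lt_of_succ_lt h⟩, f ⟨i + 1, h⟩) (g ⟨i, Nat.lt_of_succ_lt h⟩, g ⟨i + 1, h⟩)
    else 0
  else (1 : TMat N k ℂ) f g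

/-- `X ⊗ I^{⊗(k-1)}` : the first copy `X_{1̄}` of an `N×N` matrix over `A`. -/
def emb1 {N : ℕ} (k : ℕ) {A : Type _} [Ring A] (X : Matrix (Fin N) (Fin N) A) :
    TMat N k A := fun f g =>
  if h : 0 < k then
    if ∀ j : Fin k, j.val ≠ 0 → f j = g j then X (f ⟨0, h⟩) (g ⟨0, h⟩) else 0
  else (1 : TMat N k A) f g

/-- Lift a complex matrix to a matrix over the `ℂ`-algebra `A`. -/
def liftC {N k : ℕ} (A : Type _) [Ring A] [Algebra ℂ A] (X : TMat N k ℂ) : TMat N k A :=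
  X.map (algebraMap ℂ A)

/-- The copies `X_{1̄}, X_{2̄}, …` of `X` in the `k`-th tensor power:
`copyX k R Rinv X i` is the paper's `X_{\overline{i+1}}`, i.e.
`X_{1̄} = X ⊗ I^{⊗(k-1)}` and `X_{\overline{i+1}} = R_i X_{ī} R_i⁻¹`. -/
def copyX {N : ℕ} (k : ℕ) (R Rinv : RMat N) {A : Type _} [Ring A] [Algebra ℂ A]
    (X : Matrix (Fin N) (Fin N) A) : ℕ → TMat N k A
  | 0 => emb1 k X
  | i + 1 => liftC A (embR k R i) * copyX k R Rinv X i * liftC A (embR k Rinv i)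

/-- The `R`-skew-symmetrizers, on the ambient `k`-th tensor power:
`Asym k R q j` is `A^{(j)}` (acting in the first `j` factors). -/
def Asym {N : ℕ} (k : ℕ) (R : RMat N) (q : ℂ) : ℕ → TMat N k ℂ
  | 0 => 1
  | 1 => 1
  | j + 2 =>
      (qNum q (j + 2))⁻¹ •
        (Asym k R q (j + 1) *
          ((q ^ (j + 1)) • (1 : TMat N k ℂ) - (qNum q (j + 1)) • embR k R j) *
          Asym k R q (j + 1))

/-- The `R`-symmetrizers, on the ambient `k`-th tensor power:
`Ssym k R q j` is `S^{(j)}` (acting in the first `j` factors). -/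
def Ssym {N : ℕ} (k : ℕ) (R : RMat N) (q : ℂ) : ℕ → TMat N k ℂ
  | 0 => 1
  | 1 => 1
  | j + 2 =>
      (qNum q (j + 2))⁻¹ •
        (Ssym k R q (j + 1) *
          ((q⁻¹ ^ (j + 1)) • (1 : TMat N k ℂ) + (qNum q (j + 1)) • embR k R j) *
          Ssym k R q (j + 1))

/-- The braid relation `R₁₂ R₂₃ R₁₂ = R₂₃ R₁₂ R₂₃` on `(ℂ^N)^{⊗3}`. -/
def IsBraiding {N : ℕ} (R : RMat N) : Prop :=
  embR 3 R 0 * embR 3 R 1 * embR 3 R 0 = embR 3 R 1 * embR 3 R 0 * embR 3 R 1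

/-- The Hecke condition `(q·I − R)(q⁻¹·I + R) = 0`. -/
def HeckeCond {N : ℕ} (R : RMat N) (q : ℂ) : Prop :=
  (q • (1 : RMat N) - R) * (q⁻¹ • (1 : RMat N) + R) = 0

/-- The Reflection Equation `R M₁ R M₁ = M₁ R M₁ R` (on `(ℂ^N)^{⊗2}`,
with entries in `A`). -/
def RERel {N : ℕ} (R : RMat N) {A : Type _} [Ring A] [Algebra ℂ A]
    (M : Matrix (Fin N) (Fin N) A) : Prop :=
  liftC A (embR 2 R 0) * emb1 2 M * liftC A (embR 2 R 0) * emb1 2 M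
    = emb1 2 M * liftC A (embR 2 R 0) * emb1 2 M * liftC A (embR 2 R 0)

/-- The relation `R⁻¹ D₁ R⁻¹ D₁ = D₁ R⁻¹ D₁ R⁻¹` on the matrix `D`,
where `Rinv = R⁻¹`. -/
def DDRel {N : ℕ} (Rinv : RMat N) {A : Type _} [Ring A] [Algebra ℂ A]
    (D : Matrix (Fin N) (Fin N) A) : Prop :=
  liftC A (embR 2 Rinv 0) * emb1 2 D * liftC A (embR 2 Rinv 0) * emb1 2 D
    = emb1 2 D * liftC A (embR 2 Rinv 0) * emb1 2 D * liftC A (embR 2 Rinv 0)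

/-- The permutation relations `D₁ R M₁ = R M₁ R⁻¹ D₁ R⁻¹ + I`, where `Rinv = R⁻¹`. -/
def PermRel {N : ℕ} (R Rinv : RMat N) {A : Type _} [Ring A] [Algebra ℂ A]
    (M D : Matrix (Fin N) (Fin N) A) : Prop :=
  emb1 2 D * liftC A (embR 2 R 0) * emb1 2 M
    = liftC A (embR 2 R 0) * emb1 2 M * liftC A (embR 2 Rinv 0) * emb1 2 D *
        liftC A (embR 2 Rinv 0) + 1

/-- `Ψ` is the skew-inverse of `R`:  `Σ_{j,b} R^{ij}_{ab} Ψ^{bc}_{jd} = δ^i_d δ^c_a`. -/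
def SkewInv {N : ℕ} (R Ψ : RMat N) : Prop :=
  ∀ i a c d : Fin N,
    (∑ j : Fin N, ∑ b : Fin N, R (i, j) (a, b) * Ψ (b, c) (j, d))
      = if i = d ∧ c = a then 1 else 0

/-- The matrix `C`, `C^c_d = Σ_i Ψ^{ic}_{id}`. -/
def Cmat {N : ℕ} (Ψ : RMat N) : Matrix (Fin N) (Fin N) ℂ :=
  fun c d => ∑ i : Fin N, Ψ (i, c) (i, d)

/-- The `R`-trace over all `k` tensor factors: `⟨X⟩_{1…k} = Tr(C^{⊗k} X)`. -/
def rTr {N k : ℕ} {A : Type _} [Ring A] [Algebra ℂ A] (C : Matrix (Fin N) (Fin N) ℂ)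
    (X : TMat N k A) : A :=
  ∑ f : Fin k → Fin N, ∑ g : Fin k → Fin N, (∏ j : Fin k, C (f j) (g j)) • X g f

/-- The chain `X_{1̄} X_{2̄} ⋯ X_{n̄}`. -/
def upChain {N : ℕ} (k : ℕ) (R Rinv : RMat N) {A : Type _} [Ring A] [Algebra ℂ A]
    (X : Matrix (Fin N) (Fin N) A) (n : ℕ) : TMat N k A :=
  ((List.range n).map (copyX k R Rinv X)).prod

/-- The reversed chain `X_{n̄} X_{\overline{n-1}} ⋯ X_{1̄}`. -/
def downChain {N : ℕ} (k : ℕ) (R Rinv : RMat N) {A : Type _} [Ring A] [Algebra ℂ A]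
    (X : Matrix (Fin N) (Fin N) A) (n : ℕ) : TMat N k A :=
  ((List.range n).reverse.map (copyX k R Rinv X)).prod

/-- The Capelli chain `L_{1̄}(L_{2̄} + q·1_q I)(L_{3̄} + q²·2_q I) ⋯ (L_{n̄} + q^{n-1}·(n-1)_q I)`
(note `0_q = 0`). -/
def capChainA {N : ℕ} (k : ℕ) (R Rinv : RMat N) (q : ℂ) {A : Type _} [Ring A] [Algebra ℂ A]
    (L : Matrix (Fin N) (Fin N) A) (n : ℕ) : TMat N k A :=
  ((List.range n).map
    (fun i => copyX k R Rinv L i + ((q ^ i) * qNum q i) • (1 : TMat N k A))).prod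

/-- The symmetric Capelli chain
`L_{1̄}(L_{2̄} - q⁻¹·1_q I) ⋯ (L_{n̄} - q^{-(n-1)}·(n-1)_q I)`. -/
def capChainS {N : ℕ} (k : ℕ) (R Rinv : RMat N) (q : ℂ) {A : Type _} [Ring A] [Algebra ℂ A]
    (L : Matrix (Fin N) (Fin N) A) (n : ℕ) : TMat N k A :=
  ((List.range n).map
    (fun i => copyX k R Rinv L i - ((q⁻¹ ^ i) * qNum q i) • (1 : TMat N k A))).prod

/-- The descending chain `R_{a→b} = R_a R_{a-1} ⋯ R_b` (1-based indices;
identity when `b > a`). -/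
def rChainDesc {N : ℕ} (k : ℕ) (R : RMat N) (a b : ℕ) : TMat N k ℂ :=
  ((List.range' b (a + 1 - b)).reverse.map (fun j => embR k R (j - 1))).prod

/-- The ascending chain `R_{b→a} = R_b R_{b+1} ⋯ R_a` (1-based indices;
identity when `b > a`). -/
def rChainAsc {N : ℕ} (k : ℕ) (R : RMat N) (b a : ℕ) : TMat N k ℂ :=
  ((List.range' b (a + 1 - b)).map (fun j => embR k R (j - 1))).prod

set_option linter.all false

section Abs
variable {B : Type*} [Ring B] [Algebra ℂ B]

/-- abstract copies -/
def cpy (r rb : ℕ → B) (x : B) : ℕ → B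
  | 0 => x
  | i + 1 => r i * cpy r rb x i * rb i

/-- descending product -/
def dnP (D : ℕ → B) : ℕ → B
  | 0 => 1
  | n + 1 => D n * dnP D n

/-- ascending product -/
def upP (D : ℕ → B) : ℕ → B
  | 0 => 1
  | n + 1 => upP D n * D n

/-- Jucys-Murphy inverse element -/
def jmK (rb : ℕ → B) : ℕ → B
  | 0 => 1
  | n + 1 => rb n * jmK rb n * rb n

lemma comm_inv {a b y : B} (h1 : a * b = 1) (h2 : b * a = 1) (h : Commute a y) :
    Commute b y := by
  unfold Commute SemiconjBy at *
  calc b * y = b * y * (a * b) := by rw [h1, mul_one]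
    _ = b * (y * a) * b := by noncomm_ring
    _ = b * (a * y) * b := by rw [h]
    _ = (b * a) * y * b := by noncomm_ring
    _ = y * b := by rw [h2, one_mul]

/-- The braid-group data. -/
structure BrData (r rb : ℕ → B) (K : ℕ) : Prop where
  h1 : ∀ i, r i * rb i = 1
  h2 : ∀ i, rb i * r i = 1
  br : ∀ i, i + 1 < K → r i * r (i + 1) * r i = r (i + 1) * r i * r (i + 1)
  far : ∀ i j, i + 2 ≤ j → Commute (r i) (r j)

variable {r rb : ℕ → B} {K : ℕ}

lemma BrData.symm (h : BrData r rb K) : BrData rb r K where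
  h1 := h.h2
  h2 := h.h1
  br := fun i hi => by
    have e := h.br i hi
    have a1 : (rb i * rb (i+1) * rb i) * (r i * r (i + 1) * r i) = 1 := by
      calc _ = rb i * (rb (i+1) * (rb i * r i) * r (i + 1)) * r i := by noncomm_ring
        _ = 1 := by rw [h.h2, mul_one, h.h2, mul_one, h.h2]
    have a2 : (r (i+1) * r i * r (i+1)) * (rb (i+1) * rb i * rb (i+1)) = 1 := by
      calc _ = r (i+1) * (r i * (r (i+1) * rb (i+1)) * rb i) * rb (i+1) := by noncomm_ring
        _ = 1 := by rw [h.h1, mul_one, h.h1, mul_one, h.h1]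
    rw [← e] at a2
    exact left_inv_eq_right_inv a1 a2
  far := fun i j hij => comm_inv (h.h1 i) (h.h2 i)
    (comm_inv (h.h1 j) (h.h2 j) (h.far i j hij).symm).symm

lemma cpy_far (h : BrData r rb K) {x : B} (hx : ∀ i, 1 ≤ i → Commute (r i) x) :
    ∀ j i, j + 1 ≤ i → Commute (r i) (cpy r rb x j)
  | 0, i, hi => hx i hi
  | j + 1, i, hi => by
    have c1 : Commute (r i) (r j) := (h.far j i (by omega)).symm
    have c2 : Commute (r i) (rb j) := (comm_inv (h.h1 j) (h.h2 j) c1.symm).symm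
    exact (c1.mul_right (cpy_far h hx j i (by omega))).mul_right c2

lemma cpy_near (h : BrData r rb K) {x : B} (hx : ∀ i, 1 ≤ i → Commute (r i) x) :
    ∀ j i, i + 2 ≤ j → j ≤ K → Commute (r i) (cpy r rb x j)
  | 0, i, hi, _ => by omega
  | 1, i, hi, _ => by omega
  | j + 2, i, hi, hK => by
    rcases Nat.lt_or_ge i j with hij | hij
    · have c1 : Commute (r i) (r (j+1)) := (h.far i (j+1) (by omega))
      have c2 : Commute (r i) (rb (j+1)) := (comm_inv (h.h1 _) (h.h2 _) c1.symm).symm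
      exact (c1.mul_right (cpy_near h hx (j+1) i (by omega) (by omega))).mul_right c2
    · obtain rfl : i = j := by omega
      have e := h.br i (by omega)
      have e' := h.symm.br i (by omega)
      have f := (cpy_far h hx i (i+1) (by omega)).eq
      change r i * (r (i+1) * (r i * cpy r rb x i * rb i) * rb (i+1))
        = (r (i+1) * (r i * cpy r rb x i * rb i) * rb (i+1)) * r i
      have k : rb i * rb (i+1) * r i = r (i+1) * rb i * rb (i+1) := by
        have : r (i+1) * (rb (i+1) * rb i * rb (i+1)) * r i = r (i+1) * (rb i * rb (i+1) * rb i) * r i := by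
          rw [e']
        calc _ = (r (i+1) * rb (i+1)) * rb i * rb (i+1) * r i := by rw [h.h1, one_mul]
          _ = r (i+1) * (rb (i+1) * rb i * rb (i+1)) * r i := by noncomm_ring
          _ = r (i+1) * rb i * rb (i+1) * (rb i * r i) := by rw [this]; noncomm_ring
          _ = _ := by rw [h.h2, mul_one]
      calc _ = (r i * r (i+1) * r i) * cpy r rb x i * (rb i * rb (i+1)) := by noncomm_ring
        _ = r (i+1) * r i * (r (i+1) * cpy r rb x i) * (rb i * rb (i+1)) := by rw [e]; noncomm_ring
        _ = r (i+1) * r i * cpy r rb x i * (r (i+1) * rb i * rb (i+1)) := by rw [f]; noncomm_ring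
        _ = _ := by rw [← k]; noncomm_ring

/-- conjugating pairs: relation transfer from level `j` to level `j+1`. -/
lemma cpy_shift (h : BrData r rb K) {x : B} (hx : ∀ i, 1 ≤ i → Commute (r i) x) (j : ℕ) 
    (hj : j + 1 < K) :
    cpy r rb x (j+1) = (r j * r (j+1)) * cpy r rb x j * (rb (j+1) * rb j) := by
  have f := (cpy_far h hx j (j+1) (by omega)).eq
  change r j * cpy r rb x j * rb j = _
  calc _ = r j * cpy r rb x j * (r (j+1) * rb (j+1)) * rb j := by rw [h.h1, mul_one]
    _ = r j * (cpy r rb x j * r (j+1)) * rb (j+1) * rb j := by noncomm_ring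
    _ = _ := by rw [← f]; noncomm_ring

lemma r_shift (h : BrData r rb K) (j : ℕ) (hj : j + 1 < K) :
    r (j+1) = (r j * r (j+1)) * r j * (rb (j+1) * rb j) := by
  rw [h.br j hj]
  calc _ = r (j+1) * (r j * (r (j+1) * rb (j+1)) * rb j) := by rw [h.h1, mul_one, h.h1, mul_one]
    _ = _ := by noncomm_ring

lemma rb_shift (h : BrData r rb K) (j : ℕ) (hj : j + 1 < K) :
    rb (j+1) = (r j * r (j+1)) * rb j * (rb (j+1) * rb j) := by
  have e := h.symm.br j hj
  calc _ = r j * (r (j+1) * rb (j+1)) * rb j * rb (j+1) := by rw [h.h1, mul_one, h.h1, one_mul]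
    _ = r j * r (j+1) * (rb (j+1) * rb j * rb (j+1)) := by noncomm_ring
    _ = _ := by rw [← e]; noncomm_ring

lemma cj_inv (h : BrData r rb K) (j : ℕ) : (rb (j+1) * rb j) * (r j * r (j+1)) = 1 := by
  calc _ = rb (j+1) * (rb j * r j) * r (j+1) := by noncomm_ring
    _ = 1 := by rw [h.h2, mul_one, h.h2]

lemma cj_inv' (h : BrData r rb K) (j : ℕ) : (r j * r (j+1)) * (rb (j+1) * rb j) = 1 := by
  calc _ = r j * (r (j+1) * rb (j+1)) * rb j := by noncomm_ring
    _ = 1 := by rw [h.h1, mul_one, h.h1]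

lemma cj_mul {u v a b : B} (hvu : v * u = 1) :
    (u * a * v) * (u * b * v) = u * (a * b) * v := by
  calc _ = u * a * (v * u) * b * v := by noncomm_ring
    _ = _ := by rw [hvu]; noncomm_ring

lemma perm_all (h : BrData r rb K) {m d : B} (hm : ∀ i, 1 ≤ i → Commute (r i) m)
    (hd : ∀ i, 1 ≤ i → Commute (r i) d)
    (hp : d * r 0 * m = r 0 * m * rb 0 * d * rb 0 + 1) :
    ∀ j, j < K → cpy r rb d j * r j * cpy r rb m j
      = r j * cpy r rb m j * rb j * cpy r rb d j * rb j + 1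
  | 0, _ => hp
  | j + 1, hj => by
    have ih := perm_all h hm hd hp j (by omega)
    have hvu := cj_inv h j
    rw [cpy_shift h hm j hj, cpy_shift h hd j hj]
    have e1 := r_shift h j hj
    have e2 := rb_shift h j hj
    have huv := cj_inv' h j
    generalize r j * r (j+1) = u at *
    generalize rb (j+1) * rb j = v at *
    rw [e1, e2]
    simp only [cj_mul hvu]
    rw [ih, mul_add, add_mul, mul_one, huv]

lemma re_all (h : BrData r rb K) {m : B} (hm : ∀ i, 1 ≤ i → Commute (r i) m)
    (hp : r 0 * m * r 0 * m = m * r 0 * m * r 0) :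
    ∀ j, j < K → r j * cpy r rb m j * r j * cpy r rb m j
      = cpy r rb m j * r j * cpy r rb m j * r j
  | 0, _ => hp
  | j + 1, hj => by
    have ih := re_all h hm hp j (by omega)
    have hvu := cj_inv h j
    rw [cpy_shift h hm j hj]
    have e1 := r_shift h j hj
    generalize r j * r (j+1) = u at *
    generalize rb (j+1) * rb j = v at *
    rw [e1]
    simp only [cj_mul hvu]
    rw [ih]

lemma dd_all (h : BrData r rb K) {m : B} (hm : ∀ i, 1 ≤ i → Commute (r i) m)
    (hp : rb 0 * m * rb 0 * m = m * rb 0 * m * rb 0) :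
    ∀ j, j < K → rb j * cpy r rb m j * rb j * cpy r rb m j
      = cpy r rb m j * rb j * cpy r rb m j * rb j
  | 0, _ => hp
  | j + 1, hj => by
    have ih := dd_all h hm hp j (by omega)
    have hvu := cj_inv h j
    rw [cpy_shift h hm j hj]
    have e1 := rb_shift h j hj
    generalize r j * r (j+1) = u at *
    generalize rb (j+1) * rb j = v at *
    rw [e1]
    simp only [cj_mul hvu]
    rw [ih]

/-- `M_j M_{j+1}` commutes with `r_j`. -/
lemma re_comm (h : BrData r rb K) {m : B} (hm : ∀ i, 1 ≤ i → Commute (r i) m)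
    (hp : r 0 * m * r 0 * m = m * r 0 * m * r 0) (j : ℕ) (hj : j < K) :
    Commute (r j) (cpy r rb m j * cpy r rb m (j+1)) := by
  have e := re_all h hm hp j hj
  change r j * (cpy r rb m j * (r j * cpy r rb m j * rb j))
    = (cpy r rb m j * (r j * cpy r rb m j * rb j)) * r j
  calc _ = (r j * cpy r rb m j * r j * cpy r rb m j) * rb j := by noncomm_ring
    _ = cpy r rb m j * r j * cpy r rb m j * (r j * rb j) := by rw [e]; noncomm_ring
    _ = cpy r rb m j * r j * cpy r rb m j * (rb j * r j) := by rw [h.h1, h.h2]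
    _ = _ := by noncomm_ring

lemma dd_comm (h : BrData r rb K) {m : B} (hm : ∀ i, 1 ≤ i → Commute (r i) m)
    (hp : rb 0 * m * rb 0 * m = m * rb 0 * m * rb 0) (j : ℕ) (hj : j < K) :
    Commute (r j) (cpy r rb m (j+1) * cpy r rb m j) := by
  have e := dd_all h hm hp j hj
  refine comm_inv (h.h2 j) (h.h1 j) ?_
  change rb j * (r j * cpy r rb m j * rb j * cpy r rb m j)
    = (r j * cpy r rb m j * rb j * cpy r rb m j) * rb j
  calc _ = rb j * r j * (cpy r rb m j * rb j * cpy r rb m j) := by noncomm_ring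
    _ = r j * (rb j * cpy r rb m j * rb j * cpy r rb m j) := by 
      rw [h.h2, ← h.h1 j]; noncomm_ring
    _ = _ := by rw [e]; noncomm_ring

lemma up_comm (h : BrData r rb K) {m : B} (hm : ∀ i, 1 ≤ i → Commute (r i) m)
    (hp : r 0 * m * r 0 * m = m * r 0 * m * r 0) :
    ∀ n i, i + 2 ≤ n → n ≤ K + 1 → Commute (r i) (upP (cpy r rb m) n)
  | 0, i, hi, _ => by omega
  | 1, i, hi, _ => by omega
  | n + 2, i, hi, hn => by
    rcases Nat.lt_or_ge i n with hij | hij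
    · exact (up_comm h hm hp (n+1) i (by omega) (by omega)).mul_right
        (cpy_near h hm (n+1) i (by omega) (by omega))
    · obtain rfl : i = n := by omega
      change Commute (r i) (upP (cpy r rb m) i * cpy r rb m i * cpy r rb m (i+1))
      rw [mul_assoc]
      refine Commute.mul_right ?_ (re_comm h hm hp i (by omega))
      have : ∀ n, n ≤ i → Commute (r i) (upP (cpy r rb m) n) := by
        intro n
        induction n with
        | zero => intro _; exact Commute.one_right _
        | succ n ihn => intro hn'; exact (ihn (by omega)).mul_right (cpy_far h hm n i hn')
      exact this i le_rfl

lemma dn_far (h : BrData r rb K) {m : B} (hm : ∀ i, 1 ≤ i → Commute (r i) m) (i : ℕ) :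
    ∀ n, n ≤ i → Commute (r i) (dnP (cpy r rb m) n) := by
  intro n
  induction n with
  | zero => intro _; exact Commute.one_right _
  | succ n ihn => intro hn'; exact (cpy_far h hm n i hn').mul_right (ihn (by omega))

lemma dn_comm (h : BrData r rb K) {m : B} (hm : ∀ i, 1 ≤ i → Commute (r i) m)
    (hp : rb 0 * m * rb 0 * m = m * rb 0 * m * rb 0) :
    ∀ n i, i + 2 ≤ n → n ≤ K + 1 → Commute (r i) (dnP (cpy r rb m) n)
  | 0, i, hi, _ => by omega
  | 1, i, hi, _ => by omega
  | n + 2, i, hi, hn => by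
    rcases Nat.lt_or_ge i n with hij | hij
    · exact (cpy_near h hm (n+1) i (by omega) (by omega)).mul_right
        (dn_comm h hm hp (n+1) i (by omega) (by omega))
    · obtain rfl : i = n := by omega
      change Commute (r i) (cpy r rb m (i+1) * (cpy r rb m i * dnP (cpy r rb m) i))
      rw [← mul_assoc]
      exact Commute.mul_right (dd_comm h hm hp i (by omega)) (dn_far h hm i i le_rfl)

/-- if `y` commutes with `r i`, `i < n`, it commutes with `jmK n`. -/
lemma jm_comm (h : BrData r rb K) {y : B} : ∀ n, (∀ i, i < n → Commute (r i) y) → 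
    Commute (jmK rb n) y
  | 0, _ => Commute.one_left _
  | n + 1, hy => by
    have c := comm_inv (h.h1 n) (h.h2 n) (hy n (by omega))
    exact (c.mul_left (jm_comm h n (fun i hi => hy i (by omega)))).mul_left c

/-- `P_n K_n D_n = K_n P_{n+1}`. -/
lemma pkd (h : BrData r rb K) {d : B} (hd : ∀ i, 1 ≤ i → Commute (r i) d)
    (hp : rb 0 * d * rb 0 * d = d * rb 0 * d * rb 0) :
    ∀ n, n ≤ K → dnP (cpy r rb d) n * jmK rb n * cpy r rb d n = jmK rb n * dnP (cpy r rb d) (n+1)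
  | 0, _ => by simp [dnP, jmK]
  | n + 1, hn => by
    have ih := pkd h hd hp n (by omega)
    have c1 : rb n * dnP (cpy r rb d) n = dnP (cpy r rb d) n * rb n := 
      comm_inv (h.h1 n) (h.h2 n) (dn_far h hd n n le_rfl)
    have c2 : jmK rb n * cpy r rb d (n+1) = cpy r rb d (n+1) * jmK rb n := 
      jm_comm h n (fun i hi => cpy_near h hd (n+1) i (by omega) hn)
    have c3 : rb n * dnP (cpy r rb d) (n+2) = dnP (cpy r rb d) (n+2) * rb n := 
      comm_inv (h.h1 n) (h.h2 n) (dn_comm h hd hp (n+2) n (by omega) (by omega))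
    have c4 : rb n * cpy r rb d (n+1) = cpy r rb d n * rb n := by
      change rb n * (r n * cpy r rb d n * rb n) = _
      rw [← mul_assoc, ← mul_assoc, h.h2, one_mul]
    calc dnP (cpy r rb d) (n+1) * jmK rb (n+1) * cpy r rb d (n+1)
        = cpy r rb d n * (dnP (cpy r rb d) n * rb n) * jmK rb n * (rb n * cpy r rb d (n+1)) := by
          simp only [dnP, jmK]; noncomm_ring
      _ = (cpy r rb d n * rb n) * (dnP (cpy r rb d) n * jmK rb n * cpy r rb d n) * rb n := by
          rw [← c1, c4]; noncomm_ring
      _ = rb n * (cpy r rb d (n+1) * jmK rb n) * dnP (cpy r rb d) (n+1) * rb n := by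
          rw [ih, ← c4]; noncomm_ring
      _ = rb n * jmK rb n * (dnP (cpy r rb d) (n+2) * rb n) := by
          rw [← c2]; simp only [dnP]; noncomm_ring
      _ = _ := by rw [← c3]; simp only [jmK]; noncomm_ring

/-- remainder -/
def remS (r rb D : ℕ → B) : ℕ → B
  | 0 => 0
  | n + 1 => dnP D n * jmK rb n * rb n + D n * r n * remS r rb D n * rb n

lemma pm (h : BrData r rb K) {m d : B} (hm : ∀ i, 1 ≤ i → Commute (r i) m)
    (hd : ∀ i, 1 ≤ i → Commute (r i) d)
    (hp : d * r 0 * m = r 0 * m * rb 0 * d * rb 0 + 1) :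
    ∀ n, n ≤ K → dnP (cpy r rb d) n * cpy r rb m n
      = cpy r rb m n * dnP (cpy r rb d) n * jmK rb n + remS r rb (cpy r rb d) n
  | 0, _ => by simp [dnP, jmK, remS]
  | n + 1, hn => by
    have ih := pm h hm hd hp n (by omega)
    have c0 : r n * dnP (cpy r rb d) n = dnP (cpy r rb d) n * r n := dn_far h hd n n le_rfl
    have c1 : rb n * dnP (cpy r rb d) n = dnP (cpy r rb d) n * rb n := 
      comm_inv (h.h1 n) (h.h2 n) (dn_far h hd n n le_rfl)
    have e := perm_all h hm hd hp n (by omega)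
    calc dnP (cpy r rb d) (n+1) * cpy r rb m (n+1)
        = cpy r rb d n * (dnP (cpy r rb d) n * r n) * cpy r rb m n * rb n := by
          simp only [dnP, cpy]; noncomm_ring
      _ = cpy r rb d n * r n * (dnP (cpy r rb d) n * cpy r rb m n) * rb n := by
          rw [← c0]; noncomm_ring
      _ = (cpy r rb d n * r n * cpy r rb m n) * dnP (cpy r rb d) n * jmK rb n * rb n
          + cpy r rb d n * r n * remS r rb (cpy r rb d) n * rb n := by
          rw [ih]; noncomm_ring
      _ = r n * cpy r rb m n * rb n * cpy r rb d n * (rb n * dnP (cpy r rb d) n) * jmK rb n * rb n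
          + (dnP (cpy r rb d) n * jmK rb n * rb n 
          + cpy r rb d n * r n * remS r rb (cpy r rb d) n * rb n) := by
          rw [e]; noncomm_ring
      _ = _ := by rw [c1]; simp only [dnP, jmK, remS, cpy]; noncomm_ring

lemma rb_eig (h : BrData r rb K) {q : ℂ} (hq : q ≠ 0) {i : ℕ} {y : B}
    (hy : r i * y = (-q⁻¹) • y) : rb i * y = (-q) • y := by
  have : rb i * (r i * y) = (-q⁻¹) • (rb i * y) := by rw [hy, mul_smul_comm]
  rw [← mul_assoc, h.h2, one_mul] at this
  conv_rhs => rw [this, smul_smul]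
  simp [hq]

lemma rb_eig' (h : BrData r rb K) {q : ℂ} (hq : q ≠ 0) {i : ℕ} {y : B}
    (hy : y * r i = (-q⁻¹) • y) : y * rb i = (-q) • y := by
  have : (y * r i) * rb i = (-q⁻¹) • (y * rb i) := by rw [hy, smul_mul_assoc]
  rw [mul_assoc, h.h1, mul_one] at this
  conv_rhs => rw [this, smul_smul]
  simp [hq]

lemma jm_eig (h : BrData r rb K) {q : ℂ} (hq : q ≠ 0) {y : B} : ∀ n, 
    (∀ i, i < n → r i * y = (-q⁻¹) • y) → jmK rb n * y = (q ^ (2 * n)) • y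
  | 0, _ => by simp [jmK]
  | n + 1, hy => by
    have ih := jm_eig h hq n (fun i hi => hy i (by omega))
    have e := rb_eig h hq (hy n (by omega))
    simp only [jmK, mul_assoc, e, mul_smul_comm, ih, smul_smul]
    congr 1; ring

lemma jm_eig' (h : BrData r rb K) {q : ℂ} (hq : q ≠ 0) {y : B} : ∀ n, 
    (∀ i, i < n → y * r i = (-q⁻¹) • y) → y * jmK rb n = (q ^ (2 * n)) • y
  | 0, _ => by simp [jmK]
  | n + 1, hy => by
    have ih := jm_eig' h hq n (fun i hi => hy i (by omega))
    have e := rb_eig' h hq (hy n (by omega))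
    simp only [jmK, ← mul_assoc, e, smul_mul_assoc, ih, smul_smul]
    congr 1; ring

/-- the constants -/
def cc (q : ℂ) : ℕ → ℂ
  | 0 => 0
  | n + 1 => cc q n + q ^ (2 * n + 1)

lemma rem_eig (h : BrData r rb K) {q : ℂ} (hq : q ≠ 0) {d : B} 
    (hd : ∀ i, 1 ≤ i → Commute (r i) d)
    (hp : rb 0 * d * rb 0 * d = d * rb 0 * d * rb 0) {y : B} :
    ∀ n, n ≤ K → (∀ i, i < n → r i * y = (-q⁻¹) • y) → 
    remS r rb (cpy r rb d) n * cpy r rb d n * y = (-cc q n) • (dnP (cpy r rb d) n * y)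
  | 0, _, _ => by simp [remS, cc]
  | n + 1, hn, hy => by
    have ih := rem_eig h hq hd hp n (by omega) (fun i hi => hy i (by omega))
    have e := rb_eig h hq (hy n (by omega))
    have e0 := hy n (by omega)
    have je := jm_eig h hq n (fun i hi => hy i (by omega))
    have p := pkd h hd hp n (by omega)
    have c4 : rb n * cpy r rb d (n+1) = cpy r rb d n * rb n := by
      change rb n * (r n * cpy r rb d n * rb n) = _
      rw [← mul_assoc, ← mul_assoc, h.h2, one_mul]
    have c0 : r n * dnP (cpy r rb d) n = dnP (cpy r rb d) n * r n := dn_far h hd n n le_rfl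
    have c5 : jmK rb n * dnP (cpy r rb d) (n+1) = dnP (cpy r rb d) (n+1) * jmK rb n :=
      jm_comm h n (fun i hi => dn_comm h hd hp (n+1) i (by omega) (by omega))
    calc remS r rb (cpy r rb d) (n+1) * cpy r rb d (n+1) * y
        = dnP (cpy r rb d) n * jmK rb n * (rb n * cpy r rb d (n+1)) * y
          + cpy r rb d n * r n * remS r rb (cpy r rb d) n * (rb n * cpy r rb d (n+1)) * y := by
          simp only [remS]; noncomm_ring
      _ = (dnP (cpy r rb d) n * jmK rb n * cpy r rb d n) * (rb n * y)
          + cpy r rb d n * r n * (remS r rb (cpy r rb d) n * cpy r rb d n * (rb n * y)) := by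
          rw [c4]; noncomm_ring
      _ = (-q) • (dnP (cpy r rb d) (n+1) * (jmK rb n * y))
          + (-q) • (cpy r rb d n * r n * (remS r rb (cpy r rb d) n * cpy r rb d n * y)) := by
          rw [p, c5, e]; simp only [mul_smul_comm, mul_assoc]
      _ = (-q) • (q^(2*n)) • (dnP (cpy r rb d) (n+1) * y)
          + (-q) • (-cc q n) • (cpy r rb d n * (r n * dnP (cpy r rb d) n) * y) := by
          rw [je, ih]; simp only [mul_smul_comm, mul_assoc]
      _ = (-q) • (q^(2*n)) • (dnP (cpy r rb d) (n+1) * y)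
          + (-q) • (-cc q n) • (-q⁻¹) • (dnP (cpy r rb d) (n+1) * y) := by
          rw [c0, ← mul_assoc, mul_assoc _ (r n), e0]; simp only [mul_smul_comm, dnP]
      _ = _ := by
          rw [smul_smul, smul_smul, smul_smul, ← add_smul, cc]
          congr 1; field_simp; ring

/-- Capelli chain -/
def capP (q : ℂ) (L : ℕ → B) : ℕ → B
  | 0 => 1
  | n + 1 => capP q L n * (L n + cc q n • 1)

lemma cpy_mul (h : BrData r rb K) (m d : B) : ∀ n, 
    cpy r rb (m * d) n = cpy r rb m n * cpy r rb d n
  | 0 => rfl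
  | n + 1 => by
    simp only [cpy]
    rw [cpy_mul h m d n, cj_mul (h.h2 n)]

theorem capelli_abs (h : BrData r rb K) {q : ℂ} (hq : q ≠ 0) {m d : B} 
    (hm : ∀ i, 1 ≤ i → Commute (r i) m)
    (hd : ∀ i, 1 ≤ i → Commute (r i) d)
    (hre : r 0 * m * r 0 * m = m * r 0 * m * r 0)
    (hdd : rb 0 * d * rb 0 * d = d * rb 0 * d * rb 0) 
    (hp : d * r 0 * m = r 0 * m * rb 0 * d * rb 0 + 1) :
    ∀ n, n ≤ K + 1 → ∀ x y : B, (∀ i, i + 1 < n → x * r i = (-q⁻¹) • x) →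
      (∀ i, i + 1 < n → r i * y = (-q⁻¹) • y) →
      x * capP q (cpy r rb (m * d)) n * y 
        = (q ^ (n * (n - 1))) • (x * upP (cpy r rb m) n * dnP (cpy r rb d) n * y)
  | 0, _, x, y, _, _ => by simp [capP, upP, dnP]
  | n + 1, hn, x, y, hx, hy => by
    have hmd : ∀ i, 1 ≤ i → Commute (r i) (m * d) := fun i hi => (hm i hi).mul_right (hd i hi)
    have ih := capelli_abs h hq hm hd hre hdd hp n (by omega) x 
      ((cpy r rb (m * d) n + cc q n • 1) * y) (fun i hi => hx i (by omega)) (by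
        intro i hi
        have c := (cpy_near h hmd n i (by omega) (by omega)).eq
        rw [← mul_assoc, mul_add, c, mul_smul_comm, mul_one]
        have : cpy r rb (m * d) n * r i + cc q n • r i 
          = (cpy r rb (m * d) n + cc q n • 1) * r i := by simp [add_mul]
        rw [this, mul_assoc, hy i (by omega), mul_smul_comm])
    have key : dnP (cpy r rb d) n * ((cpy r rb (m * d) n + cc q n • 1) * y)
        = cpy r rb m n * jmK rb n * dnP (cpy r rb d) (n+1) * y := by
      have a1 := pm h hm hd hp n (by omega)
      have a2 := rem_eig h hq hd hdd n (by omega) (y := y) (fun i hi => hy i (by omega))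
      have a3 := pkd h hd hdd n (by omega)
      calc _ = (dnP (cpy r rb d) n * cpy r rb m n) * cpy r rb d n * y
            + cc q n • (dnP (cpy r rb d) n * y) := by
            rw [cpy_mul h]; simp only [add_mul, mul_add, smul_mul_assoc, one_mul, mul_smul_comm, mul_assoc]
        _ = cpy r rb m n * (dnP (cpy r rb d) n * jmK rb n * cpy r rb d n) * y 
            + (remS r rb (cpy r rb d) n * cpy r rb d n * y + cc q n • (dnP (cpy r rb d) n * y)) := by
            rw [a1]; noncomm_ring
        _ = _ := by rw [a2, a3]; simp [mul_assoc]
    have c1 : jmK rb n * upP (cpy r rb m) (n+1) = upP (cpy r rb m) (n+1) * jmK rb n :=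
      jm_comm h n (fun i hi => up_comm h hm hre (n+1) i (by omega) (by omega))
    calc x * capP q (cpy r rb (m * d)) (n+1) * y 
        = x * capP q (cpy r rb (m * d)) n * ((cpy r rb (m * d) n + cc q n • 1) * y) := by
          simp only [capP, mul_assoc]
      _ = q ^ (n * (n - 1)) • (x * (upP (cpy r rb m) (n+1) * jmK rb n) * dnP (cpy r rb d) (n+1) * y) := by
          rw [ih, mul_assoc _ (dnP _ _), key]; simp only [upP, mul_assoc]
      _ = q ^ (n * (n - 1)) • ((x * jmK rb n) * upP (cpy r rb m) (n+1) * dnP (cpy r rb d) (n+1) * y) := by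
          rw [← c1]; simp only [mul_assoc]
      _ = _ := by
          rw [jm_eig' h hq n (fun i hi => hx i (by omega))]
          simp only [smul_mul_assoc, smul_smul, ← pow_add]
          congr 2
          cases n with
          | zero => rfl
          | succ n => simp only [Nat.add_sub_cancel]; ring

/-- abstract antisymmetrizer -/
noncomputable def asP (r : ℕ → B) (q : ℂ) : ℕ → B
  | 0 => 1
  | 1 => 1
  | j + 2 =>
      (qNum q (j + 2))⁻¹ •
        (asP r q (j + 1) * ((q ^ (j + 1)) • (1 : B) - (qNum q (j + 1)) • r j) * asP r q (j + 1))

lemma asP_comm (h : BrData r rb K) (q : ℂ) : ∀ n i, n ≤ i → Commute (r i) (asP r q n)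
  | 0, i, _ => Commute.one_right _
  | 1, i, _ => Commute.one_right _
  | n + 2, i, hi => by
    have c := asP_comm h q (n+1) i (by omega)
    have c2 : Commute (r i) (r n) := (h.far n i (by omega)).symm
    rw [asP]
    refine Commute.smul_right ?_ _
    refine (c.mul_right ?_).mul_right c
    exact ((Commute.one_right _).smul_right _).sub_right (c2.smul_right _)

lemma qn_one {q : ℂ} (hqq : q - q⁻¹ ≠ 0) : qNum q 1 = 1 := by
  unfold qNum; simp [hqq]

lemma qn_succ {q : ℂ} (hq : q ≠ 0) (hqq : q - q⁻¹ ≠ 0) (n : ℕ) :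
    qNum q (n + 1) = q ^ n + q⁻¹ * qNum q n := by
  unfold qNum
  rw [div_eq_iff hqq, add_mul, mul_assoc, div_mul_cancel₀ _ hqq, pow_succ, pow_succ]
  ring

lemma asP_main (h : BrData r rb K) {q : ℂ} (hq : q ≠ 0) (hqq : q - q⁻¹ ≠ 0)
    (hH : ∀ i, i < K → r i * r i = (q - q⁻¹) • r i + 1) :
    ∀ n, n ≤ K + 1 → (∀ j, 2 ≤ j → j ≤ n → qNum q j ≠ 0) →
    (∀ i, i + 1 < n → r i * asP r q n = (-q⁻¹) • asP r q n) ∧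
    (∀ i, i + 1 < n → asP r q n * r i = (-q⁻¹) • asP r q n) ∧
    asP r q n * asP r q n = asP r q n ∧
    asP r q (n-1) * asP r q n = asP r q n ∧ asP r q n * asP r q (n-1) = asP r q n
  | 0, _, _ => ⟨fun i hi => by omega, fun i hi => by omega, by simp [asP], by simp [asP], by simp [asP]⟩
  | 1, _, _ => ⟨fun i hi => by omega, fun i hi => by omega, by simp [asP], by simp [asP], by simp [asP]⟩
  | n + 2, hn, hqn => by
    obtain ⟨iL, iR, iI, iA, iB⟩ := asP_main h hq hqq hH (n+1) (by omega) (fun j a b => hqn j a (by omega))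
    have hk := hqn (n+2) (by omega) le_rfl
    have hs := hH n (by omega)
    have hdef : asP r q (n+2) = (qNum q (n + 2))⁻¹ •
        (asP r q (n + 1) * ((q ^ (n + 1)) • (1 : B) - (qNum q (n + 1)) • r n) * asP r q (n + 1)) := by
      rw [asP]
    have eA : asP r q (n+1) * asP r q (n+2) = asP r q (n+2) := by
      rw [hdef, mul_smul_comm, ← mul_assoc, ← mul_assoc, iI]
    have eB : asP r q (n+2) * asP r q (n+1) = asP r q (n+2) := by
      rw [hdef, smul_mul_assoc, mul_assoc, iI]
    have hrel : asP r q (n + 1) * ((q ^ (n + 1)) • (1 : B) - (qNum q (n + 1)) • r n) * asP r q (n + 1)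
        = (q^(n+1)) • asP r q (n+1) - (qNum q (n+1)) • (asP r q (n+1) * r n * asP r q (n+1)) := by
      simp only [mul_sub, sub_mul, mul_smul_comm, smul_mul_assoc, mul_one, iI]
    have s0 : ∀ y : B, r n * (q • y - r n * y) = (-q⁻¹) • (q • y - r n * y) := by
      intro y
      rw [mul_sub, ← mul_assoc, hs, add_mul, one_mul, smul_mul_assoc, mul_smul_comm, smul_sub,
        smul_smul, sub_smul, neg_mul, inv_mul_cancel₀ hq, neg_smul, neg_smul, one_smul]
      abel
    have s0' : ∀ y : B, (q • y - y * r n) * r n = (-q⁻¹) • (q • y - y * r n) := by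
      intro y
      rw [sub_mul, mul_assoc, hs, mul_add, mul_one, mul_smul_comm, smul_mul_assoc, smul_sub,
        smul_smul, sub_smul, neg_mul, inv_mul_cancel₀ hq, neg_smul, neg_smul, one_smul]
      abel
    have last : r n * asP r q (n+2) = (-q⁻¹) • asP r q (n+2) ∧
        asP r q (n+2) * r n = (-q⁻¹) • asP r q (n+2) := by
      rcases n with _ | n
      · have e : asP r q 2 = (qNum q 2)⁻¹ • (q • 1 - r 0) := by
          rw [hdef]; simp [asP, qn_one hqq]
        constructor
        · have := s0 1
          rw [mul_one] at this
          rw [e, mul_smul_comm, this, smul_comm]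
        · have := s0' 1
          rw [one_mul] at this
          rw [e, smul_mul_assoc, this, smul_comm]
      · have hk1 := hqn (n+2) (by omega) (by omega)
        simp only [Nat.add_sub_cancel] at iA iB
        have hd1 : (qNum q (n+2)) • asP r q (n+2) = asP r q (n + 1) * ((q ^ (n + 1)) • (1 : B) - (qNum q (n + 1)) • r n) * asP r q (n + 1) := by
          rw [asP, smul_smul, mul_inv_cancel₀ hk1, one_smul]
        have ce : r (n+1) * asP r q (n+1) = asP r q (n+1) * r (n+1) := asP_comm h q (n+1) (n+1) le_rfl
        have hb := h.br n (by omega)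
        have tL := iL n (by omega)
        have tR := iR n (by omega)
        constructor
        · have X : asP r q (n + 2) * ((q ^ (n + 2)) • (1 : B) - (qNum q (n + 2)) • r (n+1)) * asP r q (n + 2)
            = q^(n+1) • (q • asP r q (n+2) - r (n+1) * asP r q (n+2)) + qNum q (n+1) •
              (asP r q (n+1) * r n * r (n+1) * asP r q (n+2)) := by
            rw [hrel, ← smul_mul_assoc, ← smul_mul_assoc, hd1, mul_assoc, mul_assoc, ← mul_assoc _ (r (n+1)), ← ce,
              mul_assoc (r (n+1)), iA]
            simp only [sub_mul, mul_sub, smul_mul_assoc, mul_smul_comm, one_mul, mul_one, smul_sub, smul_smul, ← mul_assoc]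
            rw [← ce, mul_assoc (r (n+1)), iA]
            simp only [← mul_assoc, ← pow_succ]
            abel
          rw [hdef, mul_smul_comm, smul_comm (-q⁻¹ : ℂ)]
          congr 1
          rw [X, mul_add, smul_add, mul_smul_comm, s0, smul_comm (-q⁻¹ : ℂ), mul_smul_comm, smul_comm (-q⁻¹ : ℂ) (qNum q (n+1))]
          congr 2
          calc r (n+1) * (asP r q (n+1) * r n * r (n+1) * asP r q (n+2))
              = (r (n+1) * asP r q (n+1)) * r n * r (n+1) * asP r q (n+2) := by simp only [mul_assoc]
            _ = asP r q (n+1) * (r (n+1) * r n * r (n+1)) * asP r q (n+2) := by rw [ce]; simp only [mul_assoc]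
            _ = asP r q (n+1) * r n * r (n+1) * (r n * asP r q (n+2)) := by rw [← hb]; simp only [mul_assoc]
            _ = _ := by rw [tL, mul_smul_comm]
        · have X : asP r q (n + 2) * ((q ^ (n + 2)) • (1 : B) - (qNum q (n + 2)) • r (n+1)) * asP r q (n + 2)
            = q^(n+1) • (q • asP r q (n+2) - asP r q (n+2) * r (n+1)) + qNum q (n+1) •
              (asP r q (n+2) * r (n+1) * r n * asP r q (n+1)) := by
            rw [hrel, ← mul_smul_comm, hd1, ← mul_assoc, ← mul_assoc, mul_assoc _ (r (n+1)), ce,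
              ← mul_assoc _ _ (r (n+1)), iB]
            simp only [sub_mul, mul_sub, smul_mul_assoc, mul_smul_comm, one_mul, mul_one, smul_sub, smul_smul]
            rw [mul_assoc _ (r (n+1)) (asP r q (n+1)), ce, ← mul_assoc _ _ (r (n+1)), iB]
            simp only [← pow_succ]
            abel
          rw [hdef, smul_mul_assoc, smul_comm (-q⁻¹ : ℂ)]
          congr 1
          rw [X, add_mul, smul_add, smul_mul_assoc, s0', smul_comm (-q⁻¹ : ℂ), smul_mul_assoc, smul_comm (-q⁻¹ : ℂ) (qNum q (n+1))]
          congr 2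
          calc (asP r q (n+2) * r (n+1) * r n * asP r q (n+1)) * r (n+1)
              = asP r q (n+2) * r (n+1) * r n * (asP r q (n+1) * r (n+1)) := by simp only [mul_assoc]
            _ = asP r q (n+2) * (r (n+1) * r n * r (n+1)) * asP r q (n+1) := by rw [← ce]; simp only [mul_assoc]
            _ = (asP r q (n+2) * r n) * r (n+1) * r n * asP r q (n+1) := by rw [← hb]; simp only [mul_assoc]
            _ = _ := by rw [tR]; simp only [smul_mul_assoc]
    have idem : asP r q (n+2) * asP r q (n+2) = asP r q (n+2) := by
      conv_lhs => rw [hdef]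
      rw [mul_smul_comm, ← mul_assoc, ← mul_assoc, ← hdef, eB, mul_sub, mul_smul_comm, mul_smul_comm,
        last.2, mul_one, smul_smul, ← sub_smul, smul_mul_assoc, eB, smul_smul]
      rw [show q ^ (n+1) - qNum q (n+1) * -q⁻¹ = qNum q (n+2) by rw [qn_succ hq hqq (n+1)]; ring,
        inv_mul_cancel₀ hk, one_smul]
    refine ⟨fun i hi => ?_, fun i hi => ?_, idem, eA, eB⟩
    · rcases Nat.lt_or_ge i n with hin | hin
      · rw [← eA, ← mul_assoc, iL i (by omega), smul_mul_assoc]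
      · obtain rfl : i = n := by omega
        exact last.1
    · rcases Nat.lt_or_ge i n with hin | hin
      · rw [← eB, mul_assoc, iR i (by omega), mul_smul_comm]
      · obtain rfl : i = n := by omega
        exact last.2

lemma cc_eq {q : ℂ} (hq : q ≠ 0) (hqq : q - q⁻¹ ≠ 0) : ∀ n, cc q n = q ^ n * qNum q n
  | 0 => by simp [cc, qNum]
  | n + 1 => by
    rw [cc, cc_eq hq hqq n]
    unfold qNum
    have e1 : q * q⁻¹ = 1 := mul_inv_cancel₀ hq
    have e2 : q ^ n * q⁻¹ ^ n = 1 := by rw [← mul_pow, e1, one_pow]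
    rw [← mul_div_assoc, ← mul_div_assoc, div_add' _ _ _ hqq]
    congr 1
    generalize q⁻¹ = p at *
    rw [pow_succ, pow_succ, pow_succ, two_mul, pow_add]
    linear_combination (q * p - 1) * e2 + (1 - q ^ n * q ^ n) * e1

end Abs
section Mat

/-- splitting equivalence -/
def phiE {N m k : ℕ} (e : Fin m ↪ Fin k) :
    (Fin k → Fin N) ≃ (Fin m → Fin N) × ({j // ¬ j ∈ Set.range e} → Fin N) :=
  letI : DecidablePred (fun j => j ∈ Set.range e) := Classical.decPred _
  (Equiv.piEquivPiSubtypeProd (fun j => j ∈ Set.range e) (fun _ => Fin N)).trans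
    (Equiv.prodCongr (Equiv.arrowCongr (Equiv.ofInjective e e.injective).symm (Equiv.refl _))
      (Equiv.refl _))

lemma phiE_apply {N m k : ℕ} (e : Fin m ↪ Fin k) (f : Fin k → Fin N) :
    phiE e f = (fun j => f (e j), fun j => f j.1) := rfl

open Classical in
/-- general embedding -/
def embG {N m k : ℕ} {A : Type _} [Ring A] (e : Fin m ↪ Fin k) (X : TMat N m A) : TMat N k A :=
  fun f g => if ∀ j, j ∉ Set.range e → f j = g j then X (fun j => f (e j)) (fun j => g (e j)) else 0

open Classical in
lemma embG_eq {N m k : ℕ} {A : Type _} [Ring A] (e : Fin m ↪ Fin k) (X : TMat N m A) :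
    embG e X = (Matrix.blockDiagonal (fun _ : ({j // ¬ j ∈ Set.range e} → Fin N) => X)).submatrix
      (phiE e) (phiE e) := by
  ext f g
  simp only [embG, Matrix.submatrix_apply, phiE_apply, Matrix.blockDiagonal_apply, funext_iff,
    Subtype.forall]

lemma embG_mul {N m k : ℕ} {A : Type _} [Ring A] (e : Fin m ↪ Fin k) (X Y : TMat N m A) :
    embG e (X * Y) = embG e X * embG e Y := by
  classical
  rw [embG_eq, embG_eq, embG_eq, Matrix.submatrix_mul_equiv, ← Matrix.blockDiagonal_mul]

lemma embG_one {N m k : ℕ} {A : Type _} [Ring A] (e : Fin m ↪ Fin k) :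
    embG e (1 : TMat N m A) = 1 := by
  classical
  rw [embG_eq]
  have : (fun _ : ({j // ¬ j ∈ Set.range e} → Fin N) => (1 : TMat N m A)) = 1 := rfl
  rw [this, Matrix.blockDiagonal_one, Matrix.submatrix_one_equiv]

lemma embG_add {N m k : ℕ} {A : Type _} [Ring A] (e : Fin m ↪ Fin k) (X Y : TMat N m A) :
    embG e (X + Y) = embG e X + embG e Y := by
  ext f g
  simp only [embG, Matrix.add_apply]
  split_ifs <;> simp

lemma embG_lift {N m k : ℕ} {A : Type _} [Ring A] [Algebra ℂ A] (e : Fin m ↪ Fin k) (X : TMat N m ℂ) :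
    liftC A (embG e X) = embG e (liftC A X) := by
  ext f g
  simp only [embG, liftC, Matrix.map_apply]
  split_ifs <;> simp

lemma embG_comm {N m m' k : ℕ} {A : Type _} [Ring A] (e : Fin m ↪ Fin k) (e' : Fin m' ↪ Fin k)
    (X : TMat N m A) (Y : TMat N m' A) (hd : ∀ i j, e i ≠ e' j)
    (hc : ∀ a b c d, Commute (X a b) (Y c d)) : Commute (embG e X) (embG e' Y) := by
  classical
  have key : ∀ {m m' : ℕ} (e : Fin m ↪ Fin k) (e' : Fin m' ↪ Fin k)
    (X : TMat N m A) (Y : TMat N m' A) (hd : ∀ i j, e i ≠ e' j) (f g : Fin k → Fin N),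
    (embG e X * embG e' Y) f g = if ∀ j, j ∉ Set.range e → j ∉ Set.range e' → f j = g j then
      X (fun j => f (e j)) (fun j => g (e j)) * Y (fun j => f (e' j)) (fun j => g (e' j)) else 0 := by
    intro m m' e e' X Y hd f g
    rw [Matrix.mul_apply]
    rw [Finset.sum_eq_single (fun j => if j ∈ Set.range e then g j else f j)]
    · simp only [embG]
      rw [if_pos (by intro j hj; rw [if_neg hj])]
      have h1 : (fun j => if e j ∈ Set.range e then g (e j) else f (e j)) = fun j => g (e j) := by
        funext j; rw [if_pos ⟨j, rfl⟩]
      have h2 : (fun j => if e' j ∈ Set.range e then g (e' j) else f (e' j)) = fun j => f (e' j) := by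
        funext j; rw [if_neg]; rintro ⟨i, hi⟩; exact hd i j hi
      rw [h1, h2]
      by_cases hcnd : ∀ j, j ∉ Set.range e → j ∉ Set.range e' → f j = g j
      · rw [if_pos hcnd, if_pos]
        intro j hj
        by_cases hje : j ∈ Set.range e
        · rw [if_pos hje]
        · rw [if_neg hje]; exact hcnd j hje hj
      · rw [if_neg hcnd, if_neg, mul_zero]
        intro hcn
        apply hcnd
        intro j hj hj'
        have := hcn j hj'
        rwa [if_neg hj] at this
    · intro h _ hne
      simp only [embG]
      by_cases a1 : ∀ j, j ∉ Set.range e → f j = h j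
      · by_cases a2 : ∀ j, j ∉ Set.range e' → h j = g j
        · exfalso
          apply hne
          funext j
          by_cases hje : j ∈ Set.range e
          · rw [if_pos hje]
            apply a2
            rintro ⟨i', hi'⟩
            obtain ⟨i, hi⟩ := hje
            exact hd i i' (hi.trans hi'.symm)
          · rw [if_neg hje]; exact (a1 j hje).symm
        · rw [if_neg a2, mul_zero]
      · rw [if_neg a1, zero_mul]
    · intro hh; exact absurd (Finset.mem_univ _) hh
  ext f g
  rw [key e e' X Y hd, key e' e Y X (fun i j h => hd j i h.symm)]
  have : (∀ j, j ∉ Set.range e → j ∉ Set.range e' → f j = g j) ↔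
    (∀ j, j ∉ Set.range e' → j ∉ Set.range e → f j = g j) :=
    ⟨fun h j a b => h j b a, fun h j a b => h j b a⟩
  simp only [this, (hc _ _ _ _).eq]

/-- consecutive positions -/
def posE (m k i : ℕ) (h : i + m ≤ k) : Fin m ↪ Fin k :=
  ⟨fun j => ⟨i + j.1, by omega⟩, fun a b hab => by
    apply Fin.ext; have := congrArg Fin.val hab; simp at this; exact this⟩

@[simp] lemma posE_val {m k i : ℕ} (h : i + m ≤ k) (j : Fin m) : (posE m k i h j).1 = i + j.1 := rfl

lemma posE_range {m k i : ℕ} (h : i + m ≤ k) (j : Fin k) :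
    j ∈ Set.range (posE m k i h) ↔ i ≤ j.1 ∧ j.1 < i + m := by
  constructor
  · rintro ⟨x, rfl⟩; rw [posE_val]; omega
  · rintro ⟨a, b⟩
    exact ⟨⟨j.1 - i, by omega⟩, by apply Fin.ext; simp only [posE_val]; omega⟩

lemma embR_pos {N m k : ℕ} (i t : ℕ) (h : i + m ≤ k) (ht : t + 1 < m) (R : RMat N) :
    embR k R (i + t) = embG (posE m k i h) (embR m R t) := by
  ext f g
  simp only [embR, embG]
  rw [dif_pos (by omega), dif_pos ht]
  by_cases c1 : ∀ j : Fin k, j.val ≠ i + t → j.val ≠ i + t + 1 → f j = g j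
  · rw [if_pos c1, if_pos, if_pos]
    · rfl
    · intro j h1 h2
      apply c1
      · simp only [posE_val]; omega
      · simp only [posE_val]; omega
    · intro j hj
      rw [posE_range] at hj
      apply c1 <;> omega
  · rw [if_neg c1]
    split_ifs with c2 c3
    · exfalso
      apply c1
      intro j h1 h2
      by_cases hj : j ∈ Set.range (posE m k i h)
      · obtain ⟨x, rfl⟩ := hj
        apply c3
        · intro hx; apply h1; rw [posE_val]; omega
        · intro hx; apply h2; rw [posE_val]; omega
      · exact c2 j hj
    · rfl
    · rfl

lemma emb1_pos {N m k : ℕ} {A : Type _} [Ring A] (h : 0 + m ≤ k) (ht : 0 < m)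
    (X : Matrix (Fin N) (Fin N) A) :
    emb1 k X = embG (posE m k 0 h) (emb1 m X) := by
  ext f g
  simp only [emb1, embG]
  rw [dif_pos (by omega), dif_pos ht]
  by_cases c1 : ∀ j : Fin k, j.val ≠ 0 → f j = g j
  · rw [if_pos c1, if_pos, if_pos]
    · rfl
    · intro j h1
      apply c1
      simp only [posE_val]; omega
    · intro j hj
      rw [posE_range] at hj
      apply c1; omega
  · rw [if_neg c1]
    split_ifs with c2 c3
    · exfalso
      apply c1
      intro j h1
      by_cases hj : j ∈ Set.range (posE m k 0 h)
      · obtain ⟨x, rfl⟩ := hj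
        apply c3
        intro hx; apply h1; rw [posE_val]; omega
      · exact c2 j hj
    · rfl
    · rfl

lemma embR_out {N k : ℕ} (i : ℕ) (h : ¬ i + 1 < k) (R : RMat N) : embR k R i = 1 := by
  ext f g
  simp only [embR]
  rw [dif_neg h]

/-- the pair equivalence -/
lemma embR2_eq {N : ℕ} (R : RMat N) :
    embR 2 R 0 = R.submatrix (finTwoArrowEquiv (Fin N)) (finTwoArrowEquiv (Fin N)) := by
  ext f g
  simp only [embR, Matrix.submatrix_apply]
  rw [dif_pos (by norm_num), if_pos]
  · rfl
  · intro j h1 h2; omega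

lemma emb11_eq {N : ℕ} {A : Type _} [Ring A] (X : Matrix (Fin N) (Fin N) A) :
    emb1 1 X = X.submatrix (Equiv.funUnique (Fin 1) (Fin N)) (Equiv.funUnique (Fin 1) (Fin N)) := by
  ext f g
  simp only [emb1, Matrix.submatrix_apply]
  rw [dif_pos (by norm_num), if_pos]
  · rfl
  · intro j h1; omega

lemma emb1_mul {N k : ℕ} (hk : 1 ≤ k) {A : Type _} [Ring A] (X Y : Matrix (Fin N) (Fin N) A) :
    emb1 k (X * Y) = emb1 k X * emb1 k Y := by
  rw [emb1_pos (m := 1) (by omega) (by omega), emb1_pos (m := 1) (by omega) (by omega) X,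
    emb1_pos (m := 1) (by omega) (by omega) Y, ← embG_mul, emb11_eq, emb11_eq, emb11_eq,
    Matrix.submatrix_mul_equiv]

lemma embR_in {N k : ℕ} (i : ℕ) (h : i + 1 < k) (R : RMat N) :
    embR k R i = embG (posE 2 k i (by omega)) (embR 2 R 0) :=
  embR_pos i 0 (by omega) (by omega) R

lemma embR_inv {N k : ℕ} (i : ℕ) {R S : RMat N} (hRS : R * S = 1) :
    embR k R i * embR k S i = 1 := by
  by_cases h : i + 1 < k
  · rw [embR_in i h, embR_in i h, ← embG_mul, embR2_eq, embR2_eq, Matrix.submatrix_mul_equiv, hRS,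
      Matrix.submatrix_one_equiv, embG_one]
  · rw [embR_out i h, embR_out i h, one_mul]

lemma embR_far {N k : ℕ} (i j : ℕ) (hij : i + 2 ≤ j) (R S : RMat N) :
    Commute (embR k R i) (embR k S j) := by
  by_cases h : j + 1 < k
  · rw [embR_in i (by omega), embR_in j h]
    apply embG_comm
    · intro a b hab
      have := congrArg Fin.val hab
      simp only [posE_val] at this; omega
    · intros; exact Commute.all _ _
  · rw [embR_out j h]; exact Commute.one_right _

lemma embR_emb1 {N k : ℕ} {A : Type _} [Ring A] [Algebra ℂ A] (i : ℕ) (hi : 1 ≤ i) (R : RMat N)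
    (X : Matrix (Fin N) (Fin N) A) :
    Commute (liftC A (embR k R i)) (emb1 k X) := by
  by_cases h : i + 1 < k
  · rw [embR_in i h, embG_lift, emb1_pos (m := 1) (by omega) (by omega)]
    apply embG_comm
    · intro a b hab
      have := congrArg Fin.val hab
      simp only [posE_val] at this; omega
    · intros; exact Algebra.commutes _ _
  · rw [embR_out i h]
    have : liftC A (1 : TMat N k ℂ) = 1 := by
      simp [liftC]
    rw [this]; exact Commute.one_left _

lemma embR_braid {N k : ℕ} (i : ℕ) (h : i + 2 < k) {R : RMat N} (hbr : IsBraiding R) :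
    embR k R i * embR k R (i+1) * embR k R i = embR k R (i+1) * embR k R i * embR k R (i+1) := by
  have e0 := embR_pos (m := 3) (k := k) i 0 (by omega) (by omega) R
  have e1 := embR_pos (m := 3) (k := k) i 1 (by omega) (by omega) R
  rw [add_zero] at e0
  rw [e0, e1, ← embG_mul, ← embG_mul, ← embG_mul, ← embG_mul, hbr]

lemma embR_hecke {N k : ℕ} (i : ℕ) (h : i + 1 < k) {R : RMat N} {q : ℂ} (hq : q ≠ 0) 
    (hH : HeckeCond R q) :
    embR k R i * embR k R i = (q - q⁻¹) • embR k R i + 1 := by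
  have hR : R * R = (q - q⁻¹) • R + 1 := by
    unfold HeckeCond at hH
    rw [sub_mul, mul_add, mul_add, smul_mul_assoc, smul_mul_assoc, one_mul, one_mul, mul_smul_comm,
      mul_one, smul_smul, mul_inv_cancel₀ hq, one_smul] at hH
    rw [sub_smul]
    rw [sub_eq_zero] at hH
    rw [← sub_eq_zero] at hH ⊢
    rw [← neg_eq_zero, ← hH]
    abel
  have hS : embG (posE 2 k i (by omega)) (((q - q⁻¹) • embR 2 R 0)) 
      = (q - q⁻¹) • embG (posE 2 k i (by omega)) (embR 2 R 0) := by
    ext f g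
    simp only [embG, Matrix.smul_apply]
    split_ifs <;> simp
  rw [embR_in i h, ← embG_mul, ← hS]
  conv_rhs => rw [← embG_one (posE 2 k i (by omega))]
  rw [← embG_add]
  congr 1
  rw [embR2_eq, Matrix.submatrix_mul_equiv, hR]
  ext f g
  simp [Matrix.one_apply, funext_iff]

lemma liftC_mul {N k : ℕ} {A : Type _} [Ring A] [Algebra ℂ A] (X Y : TMat N k ℂ) :
    liftC A (X * Y) = liftC A X * liftC A Y := by
  simp only [liftC]; exact Matrix.map_mul

lemma liftC_one {N k : ℕ} {A : Type _} [Ring A] [Algebra ℂ A] :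
    liftC A (1 : TMat N k ℂ) = 1 := by
  simp [liftC]

lemma liftC_smul {N k : ℕ} {A : Type _} [Ring A] [Algebra ℂ A] (c : ℂ) (X : TMat N k ℂ) :
    liftC A (c • X) = c • liftC A X := by
  ext f g
  simp only [liftC, Matrix.map_apply, Matrix.smul_apply, smul_eq_mul, map_mul]
  rw [Algebra.smul_def]

/-- tensor power of `C` -/
def CT {N : ℕ} (k : ℕ) (C : Matrix (Fin N) (Fin N) ℂ) : TMat N k ℂ :=
  fun f g => ∏ j : Fin k, C (f j) (g j)

lemma CT_comm {N m k : ℕ} (e : Fin m ↪ Fin k) (C : Matrix (Fin N) (Fin N) ℂ) (X : TMat N m ℂ)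
    (h : Commute (CT m C) X) : Commute (CT k C) (embG e X) := by
  classical
  let W : Matrix ({j // ¬ j ∈ Set.range e} → Fin N) ({j // ¬ j ∈ Set.range e} → Fin N) ℂ :=
    fun f g => ∏ j, C (f j) (g j)
  have h1 : CT k C = (Matrix.kroneckerMap (fun a b => a * b) (CT m C) W).submatrix (phiE e) (phiE e) := by
    ext f g
    simp only [Matrix.submatrix_apply, phiE_apply, Matrix.kroneckerMap_apply, CT, W]
    rw [← Fintype.prod_subtype_mul_prod_subtype (fun j => j ∈ Set.range e) (fun j => C (f j) (g j))]
    congr 1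
    have := (Fintype.prod_equiv (Equiv.ofInjective e e.injective) (fun j => C (f (e j)) (g (e j)))
      (fun j => C (f j.1) (g j.1)) (fun x => rfl)).symm
    convert this
    rfl
  have h2 : embG e X = (Matrix.kroneckerMap (fun a b => a * b) X 1).submatrix (phiE e) (phiE e) := by
    rw [embG_eq]
    ext f g
    simp only [Matrix.submatrix_apply, phiE_apply, Matrix.kroneckerMap_apply, 
      Matrix.blockDiagonal_apply, Matrix.one_apply, mul_ite, mul_one, mul_zero]
  unfold Commute SemiconjBy at *
  rw [h1, h2, Matrix.submatrix_mul_equiv, Matrix.submatrix_mul_equiv, ← Matrix.mul_kronecker_mul,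
    ← Matrix.mul_kronecker_mul, h, mul_one, one_mul]

lemma rTr_eq {N k : ℕ} {A : Type _} [Ring A] [Algebra ℂ A] (C : Matrix (Fin N) (Fin N) ℂ)
    (X : TMat N k A) : rTr C X = Matrix.trace (liftC A (CT k C) * X) := by
  simp only [rTr, Matrix.trace, Matrix.diag_apply, Matrix.mul_apply, liftC, Matrix.map_apply, CT,
    Algebra.smul_def]

lemma tr_cyc {N k : ℕ} {A : Type _} [Ring A] [Algebra ℂ A] (Y : TMat N k ℂ)
    (X : TMat N k A) : Matrix.trace (X * liftC A Y) = Matrix.trace (liftC A Y * X) := by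
  simp only [Matrix.trace, Matrix.diag_apply, Matrix.mul_apply, liftC, Matrix.map_apply]
  rw [Finset.sum_comm]
  refine Finset.sum_congr rfl fun i _ => Finset.sum_congr rfl fun j _ => ?_
  exact (Algebra.commutes _ _).symm

lemma rTr_cyc {N k : ℕ} {A : Type _} [Ring A] [Algebra ℂ A] (C : Matrix (Fin N) (Fin N) ℂ)
    (Y : TMat N k ℂ) (hY : Commute (CT k C) Y) (X : TMat N k A) :
    rTr C (X * liftC A Y) = rTr C (liftC A Y * X) := by
  rw [rTr_eq, rTr_eq, ← mul_assoc, tr_cyc, ← mul_assoc, ← mul_assoc, ← liftC_mul, ← liftC_mul, hY.eq]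

end Mat

section CC

/-- triples -/
def e3 (N : ℕ) : (Fin 3 → Fin N) ≃ Fin N × Fin N × Fin N where
  toFun h := (h 0, h 1, h 2)
  invFun p := ![p.1, p.2.1, p.2.2]
  left_inv h := by
    funext j; fin_cases j <;> rfl
  right_inv p := rfl

lemma e3_symm {N : ℕ} (x y z : Fin N) : (e3 N).symm (x, y, z) = ![x, y, z] := rfl

lemma embR3_0 {N : ℕ} (R : RMat N) (x y z a b c : Fin N) :
    embR 3 R 0 ![x, y, z] ![a, b, c] = if z = c then R (x, y) (a, b) else 0 := by
  simp only [embR]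
  rw [dif_pos (by norm_num)]
  have : (∀ j : Fin 3, j.val ≠ 0 → j.val ≠ 0 + 1 → (![x, y, z] : Fin 3 → Fin N) j = ![a, b, c] j) ↔ z = c := by
    simp [Fin.forall_fin_succ]
  simp only [this]
  rfl

lemma embR3_1 {N : ℕ} (R : RMat N) (x y z a b c : Fin N) :
    embR 3 R 1 ![x, y, z] ![a, b, c] = if x = a then R (y, z) (b, c) else 0 := by
  simp only [embR]
  rw [dif_pos (by norm_num)]
  have : (∀ j : Fin 3, j.val ≠ 1 → j.val ≠ 1 + 1 → (![x, y, z] : Fin 3 → Fin N) j = ![a, b, c] j) ↔ x = a := by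
    simp [Fin.forall_fin_succ]
  simp only [this]
  rfl

lemma mul3_0 {N : ℕ} (R : RMat N) (Y : TMat N 3 ℂ) (f : Fin 3 → Fin N) (a b c : Fin N) :
    (Y * embR 3 R 0) f ![a, b, c] = ∑ x, ∑ y, Y f ![x, y, c] * R (x, y) (a, b) := by
  rw [Matrix.mul_apply, ← (e3 N).symm.sum_comp, Fintype.sum_prod_type]
  refine Finset.sum_congr rfl fun x _ => ?_
  rw [Fintype.sum_prod_type]
  refine Finset.sum_congr rfl fun y _ => ?_
  simp only [e3_symm, embR3_0, mul_ite, mul_zero, Finset.sum_ite_eq', Finset.sum_ite_eq, Finset.mem_univ, if_true]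

lemma mul3_1 {N : ℕ} (R : RMat N) (Y : TMat N 3 ℂ) (f : Fin 3 → Fin N) (a b c : Fin N) :
    (Y * embR 3 R 1) f ![a, b, c] = ∑ x, ∑ y, Y f ![a, x, y] * R (x, y) (b, c) := by
  rw [Matrix.mul_apply, ← (e3 N).symm.sum_comp, Fintype.sum_prod_type]
  rw [Finset.sum_eq_single a]
  · rw [Fintype.sum_prod_type]
    refine Finset.sum_congr rfl fun x _ => Finset.sum_congr rfl fun y _ => ?_
    simp [e3_symm, embR3_1]
  · intro x _ hx
    apply Finset.sum_eq_zero
    rintro ⟨y, z⟩ _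
    rw [e3_symm, embR3_1, if_neg hx, mul_zero]
  · intro h; exact absurd (Finset.mem_univ _) h

lemma braid_comp {N : ℕ} {R Rb : RMat N} (h1 : R * Rb = 1) (h2 : Rb * R = 1) (hbr : IsBraiding R)
    (i j k a b c : Fin N) :
    ∑ x, ∑ z, (∑ y, R (i, j) (x, y) * R (y, k) (z, c)) * Rb (x, z) (a, b)
      = ∑ x, ∑ z, (∑ y, Rb (j, k) (y, z) * R (i, y) (a, x)) * R (x, z) (b, c) := by
  have e : embR 3 R 0 * embR 3 R 1 * embR 3 Rb 0 = embR 3 Rb 1 * embR 3 R 0 * embR 3 R 1 := by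
    have b0 := embR_inv (k := 3) 0 h1
    have b1 := embR_inv (k := 3) 1 h2
    unfold IsBraiding at hbr
    calc _ = (embR 3 Rb 1 * embR 3 R 1) * embR 3 R 0 * embR 3 R 1 * embR 3 Rb 0 := by rw [b1, one_mul]
      _ = embR 3 Rb 1 * (embR 3 R 1 * embR 3 R 0 * embR 3 R 1) * embR 3 Rb 0 := by simp only [mul_assoc]
      _ = embR 3 Rb 1 * embR 3 R 0 * embR 3 R 1 * (embR 3 R 0 * embR 3 Rb 0) := by
        rw [← hbr]; simp only [mul_assoc]
      _ = _ := by rw [b0, mul_one]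
  have := congrFun (congrFun e ![i, j, k]) ![a, b, c]
  simp only [mul3_0, mul3_1, embR3_0, embR3_1, ite_mul, zero_mul, Finset.sum_ite_eq, 
    Finset.mem_univ, if_true] at this
  rw [this]
  refine Finset.sum_congr rfl fun x _ => Finset.sum_congr rfl fun z _ => ?_
  congr 1
  rw [Finset.sum_comm]
  refine Finset.sum_congr rfl fun y _ => ?_
  simp

lemma sum5f {N : ℕ} (G : Fin N → Fin N → Fin N → Fin N → Fin N → ℂ) :
    ∑ i, ∑ a, ∑ x, ∑ z, ∑ y, G i a x z y
      = ∑ p : Fin N × Fin N × Fin N × Fin N × Fin N, G p.1 p.2.1 p.2.2.1 p.2.2.2.1 p.2.2.2.2 := by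
  simp only [Fintype.sum_prod_type]

lemma sum5a {N : ℕ} (G : Fin N → Fin N → Fin N → Fin N → Fin N → ℂ) :
    ∑ i, ∑ a, ∑ x, ∑ z, ∑ y, G i a x z y = ∑ y, ∑ z, ∑ i, ∑ a, ∑ x, G i a x z y := by
  rw [sum5f, sum5f (fun y z i a x => G i a x z y)]
  exact Fintype.sum_equiv ⟨fun p : Fin N × Fin N × Fin N × Fin N × Fin N => 
      (p.2.2.2.2, p.2.2.2.1, p.1, p.2.1, p.2.2.1),
    fun p : Fin N × Fin N × Fin N × Fin N × Fin N => 
      (p.2.2.1, p.2.2.2.1, p.2.2.2.2, p.2.1, p.1), fun _ => rfl, fun _ => rfl⟩ _ _ (fun p => rfl)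

lemma sum5b {N : ℕ} (G : Fin N → Fin N → Fin N → Fin N → Fin N → ℂ) :
    ∑ i, ∑ a, ∑ x, ∑ z, ∑ y, G i a x z y = ∑ x, ∑ z, ∑ y, ∑ i, ∑ a, G i a x z y := by
  rw [sum5f, sum5f (fun x z y i a => G i a x z y)]
  exact Fintype.sum_equiv ⟨fun p : Fin N × Fin N × Fin N × Fin N × Fin N => 
      (p.2.2.1, p.2.2.2.1, p.2.2.2.2, p.1, p.2.1),
    fun p : Fin N × Fin N × Fin N × Fin N × Fin N => 
      (p.2.2.2.1, p.2.2.2.2, p.1, p.2.1, p.2.2.1), fun _ => rfl, fun _ => rfl⟩ _ _ (fun p => rfl)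

lemma C_left {N : ℕ} {R Rb Ψ : RMat N} (h1 : R * Rb = 1) (h2 : Rb * R = 1) (hbr : IsBraiding R)
    (hΨ : SkewInv R Ψ) (p t b w : Fin N) :
    ∑ s, Cmat Ψ p s * Ψ (s, t) (b, w) = ∑ a, Rb (t, p) (a, b) * Cmat Ψ a w := by
  let Rh : RMat N := fun u v => R (u.1, v.1) (u.2, v.2)
  let Ph : RMat N := fun u v => Ψ (u.2, v.2) (u.1, v.1)
  have hRP : Rh * Ph = 1 := by
    ext ⟨i, a⟩ ⟨d, c⟩
    rw [Matrix.mul_apply, Fintype.sum_prod_type, Matrix.one_apply]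
    have := hΨ i a c d
    simp only [Rh, Ph]
    rw [this]
    simp only [Prod.mk.injEq, eq_comm (a := c)]
  have hPR : Ph * Rh = 1 := mul_eq_one_comm.mp hRP
  have hC : ∀ y x : Fin N, ∑ i, ∑ a, Cmat Ψ a i * R (i, y) (a, x) = if y = x then 1 else 0 := by
    intro y x
    have : ∀ j : Fin N, ∑ i, ∑ a, Ψ (j, a) (j, i) * R (i, y) (a, x) = if (j, j) = (y, x) then 1 else 0 := by
      intro j
      have := congrFun (congrFun hPR (j, j)) (y, x)
      rw [Matrix.mul_apply, Fintype.sum_prod_type, Matrix.one_apply] at this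
      exact this
    simp only [Cmat, Finset.sum_mul]
    calc _ = ∑ j, ∑ i, ∑ a, Ψ (j, a) (j, i) * R (i, y) (a, x) := by
          have e1 : ∀ i : Fin N, ∑ a, ∑ j, Ψ (j, a) (j, i) * R (i, y) (a, x)
              = ∑ j, ∑ a, Ψ (j, a) (j, i) * R (i, y) (a, x) := fun i => Finset.sum_comm
          rw [Finset.sum_congr rfl fun i _ => e1 i]
          exact Finset.sum_comm
      _ = _ := by
          simp only [this, Prod.mk.injEq]
          by_cases hxy : y = x
          · subst hxy; simp
          · rw [if_neg hxy]
            apply Finset.sum_eq_zero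
            intro j _
            rw [if_neg]
            rintro ⟨rfl, h⟩; exact hxy h
  let F : RMat N := fun u v => ∑ i, ∑ a, ∑ x, Cmat Ψ a i * R (i, u.1) (x, v.1) * Rb (x, v.2) (a, u.2)
  let Dl : RMat N := fun u v => if u.1 = u.2 ∧ v.1 = v.2 then 1 else 0
  have hF : F * Rh = Dl := by
    ext ⟨j, b⟩ ⟨k, c⟩
    rw [Matrix.mul_apply, Fintype.sum_prod_type]
    have A1 : ∑ i, ∑ a, Cmat Ψ a i * (∑ x, ∑ z, (∑ y, R (i, j) (x, y) * R (y, k) (z, c)) * Rb (x, z) (a, b))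
        = ∑ i, ∑ a, Cmat Ψ a i * (∑ x, ∑ z, (∑ y, Rb (j, k) (y, z) * R (i, y) (a, x)) * R (x, z) (b, c)) := by
      refine Finset.sum_congr rfl fun i _ => Finset.sum_congr rfl fun a _ => ?_
      rw [braid_comp h1 h2 hbr]
    simp only [Finset.mul_sum, Finset.sum_mul] at A1
    have A1' := (sum5a (fun i a x z y => Cmat Ψ a i * (R (i,j) (x,y) * R (y,k) (z,c) * Rb (x,z) (a,b)))).symm.trans
      (A1.trans (sum5b (fun i a x z y => Cmat Ψ a i * (Rb (j,k) (y,z) * R (i,y) (a,x) * R (x,z) (b,c)))))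
    have A2 : ∑ x, ∑ z, ∑ y, ∑ i, ∑ a, Cmat Ψ a i * (Rb (j, k) (y, z) * R (i, y) (a, x) * R (x, z) (b, c))
        = Dl (j, b) (k, c) := by
      have : ∀ x z y, ∑ i, ∑ a, Cmat Ψ a i * (Rb (j, k) (y, z) * R (i, y) (a, x) * R (x, z) (b, c))
        = if y = x then Rb (j, k) (y, z) * R (x, z) (b, c) else 0 := by
        intro x z y
        calc _ = Rb (j, k) (y, z) * R (x, z) (b, c) * ∑ i, ∑ a, Cmat Ψ a i * R (i, y) (a, x) := by
              simp only [Finset.mul_sum]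
              refine Finset.sum_congr rfl fun i _ => Finset.sum_congr rfl fun a _ => ?_
              ring
          _ = _ := by rw [hC]; split_ifs <;> simp
      simp only [this, Finset.sum_ite_eq', Finset.mem_univ, if_true]
      have e := congrFun (congrFun h2 (j, k)) (b, c)
      rw [Matrix.mul_apply, Fintype.sum_prod_type, Matrix.one_apply] at e
      rw [e]
      simp only [Dl, Prod.mk.injEq]
    refine Eq.trans ?_ (A1'.trans A2)
    refine Finset.sum_congr rfl fun y _ => Finset.sum_congr rfl fun z _ => ?_
    simp only [F, Rh, Finset.sum_mul]
    refine Finset.sum_congr rfl fun i _ => Finset.sum_congr rfl fun a _ => 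
      Finset.sum_congr rfl fun x _ => ?_
    ring
  have hF2 : F = Dl * Ph := by rw [← hF, mul_assoc, hRP, mul_one]
  have hF3 : ∀ j b y z, F (j, b) (y, z) = if j = b then Cmat Ψ z y else 0 := by
    intro j b y z
    rw [hF2, Matrix.mul_apply, Fintype.sum_prod_type]
    simp only [Dl, Ph, Cmat, ite_mul, one_mul, zero_mul]
    by_cases hjb : j = b
    · simp [hjb]
    · simp [hjb]
  let G : RMat N := fun u v => ∑ a, Cmat Ψ a v.1 * Rb (v.2, u.1) (a, u.2)
  let H : RMat N := fun u v => if v.1 = u.2 then Cmat Ψ u.1 v.2 else 0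
  have hG : G * Rh = H := by
    ext ⟨p, b⟩ ⟨j, s⟩
    rw [Matrix.mul_apply, Fintype.sum_prod_type]
    have := hF3 j b s p
    simp only [H]
    rw [← this]
    simp only [F, G, Rh, Finset.sum_mul]
    refine Finset.sum_congr rfl fun i _ => ?_
    rw [Finset.sum_comm]
    refine Finset.sum_congr rfl fun a _ => Finset.sum_congr rfl fun x _ => ?_
    ring
  have hG2 : G = H * Ph := by rw [← hG, mul_assoc, hRP, mul_one]
  have := congrFun (congrFun hG2 (p, b)) (w, t)
  rw [Matrix.mul_apply, Fintype.sum_prod_type] at this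
  simp only [G, H, Ph, ite_mul, zero_mul] at this
  rw [Finset.sum_comm] at this
  simp only [Finset.sum_ite_eq', Finset.sum_ite_eq, Finset.mem_univ, if_true] at this
  rw [← this]
  refine Finset.sum_congr rfl fun a _ => mul_comm _ _

lemma embR_tr {N k : ℕ} (R : RMat N) (i : ℕ) : embR k Rᵀ i = (embR k R i)ᵀ := by
  ext f g
  simp only [embR, Matrix.transpose_apply, eq_comm (a := f _), Matrix.one_apply, eq_comm (a := f)]

lemma C_right {N : ℕ} {R Rb Ψ : RMat N} (h1 : R * Rb = 1) (h2 : Rb * R = 1) (hbr : IsBraiding R)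
    (hΨ : SkewInv R Ψ) (p t b w : Fin N) :
    ∑ s, Ψ (b, w) (s, t) * Cmat Ψ s p = ∑ a, Cmat Ψ w a * Rb (a, b) (t, p) := by
  have t1 : Rᵀ * Rbᵀ = 1 := by rw [← Matrix.transpose_mul, h2, Matrix.transpose_one]
  have t2 : Rbᵀ * Rᵀ = 1 := by rw [← Matrix.transpose_mul, h1, Matrix.transpose_one]
  have tb : IsBraiding Rᵀ := by
    unfold IsBraiding at *
    simp only [embR_tr, ← Matrix.transpose_mul]
    rw [← mul_assoc, ← mul_assoc, hbr]
  have tΨ : SkewInv Rᵀ Ψᵀ := by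
    intro i a c d
    have := hΨ a i d c
    simp only [Matrix.transpose_apply]
    rw [Finset.sum_comm, this]
    simp only [eq_comm (a := i), eq_comm (a := c), and_comm]
  have tC : ∀ x y, Cmat Ψᵀ x y = Cmat Ψ y x := fun x y => rfl
  have := C_left t1 t2 tb tΨ p t b w
  simp only [tC, Matrix.transpose_apply] at this
  simp only [mul_comm (Ψ _ _), this, mul_comm (Rb _ _)]

lemma CC_comm {N : ℕ} {R Rb Ψ : RMat N} (h1 : R * Rb = 1) (h2 : Rb * R = 1) (hbr : IsBraiding R)
    (hΨ : SkewInv R Ψ) : Commute (CT 2 (Cmat Ψ)) (embR 2 R 0) := by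
  let W : RMat N := fun u v => Cmat Ψ u.1 v.1 * Cmat Ψ u.2 v.2
  have e1 : Rb * W = W * Rb := by
    ext ⟨t, p⟩ ⟨w, v⟩
    rw [Matrix.mul_apply, Matrix.mul_apply, Fintype.sum_prod_type, Fintype.sum_prod_type]
    simp only [W]
    calc _ = ∑ b, (∑ a, Rb (t, p) (a, b) * Cmat Ψ a w) * Cmat Ψ b v := by
          rw [Finset.sum_comm]
          simp only [Finset.sum_mul, mul_assoc]
      _ = ∑ b, (∑ s, Cmat Ψ p s * Ψ (s, t) (b, w)) * Cmat Ψ b v := by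
          simp only [C_left h1 h2 hbr hΨ]
      _ = ∑ s, Cmat Ψ p s * ∑ b, Ψ (s, t) (b, w) * Cmat Ψ b v := by
          simp only [Finset.sum_mul, Finset.mul_sum, mul_assoc]
          rw [Finset.sum_comm]
      _ = _ := by
          simp only [C_right h1 h2 hbr hΨ, Finset.mul_sum]
          rw [Finset.sum_comm]
          refine Finset.sum_congr rfl fun a _ => Finset.sum_congr rfl fun s _ => ?_
          ring
  have e2 : W * R = R * W := by
    calc W * R = R * (Rb * W) * R := by rw [← mul_assoc, h1, one_mul]
      _ = R * W * (Rb * R) := by rw [e1]; simp only [mul_assoc]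
      _ = _ := by rw [h2, mul_one]
  have e3 : CT 2 (Cmat Ψ) = W.submatrix (finTwoArrowEquiv (Fin N)) (finTwoArrowEquiv (Fin N)) := by
    ext f g
    simp only [CT, Fin.prod_univ_two, W, Matrix.submatrix_apply]
    rfl
  unfold Commute SemiconjBy
  rw [e3, embR2_eq, Matrix.submatrix_mul_equiv, Matrix.submatrix_mul_equiv, e2]

end CC


section Fin

lemma Asym_eq {N k : ℕ} (R : RMat N) (q : ℂ) : ∀ n, Asym k R q n = asP (embR k R) q n
  | 0 => rfl
  | 1 => rfl
  | n + 2 => by rw [Asym, asP, Asym_eq R q (n + 1)]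

lemma copyX_eq {N k : ℕ} (R Rinv : RMat N) {A : Type _} [Ring A] [Algebra ℂ A]
    (X : Matrix (Fin N) (Fin N) A) : ∀ n, copyX k R Rinv X n
      = cpy (fun i => liftC A (embR k R i)) (fun i => liftC A (embR k Rinv i)) (emb1 k X) n
  | 0 => rfl
  | n + 1 => by rw [copyX, cpy, copyX_eq R Rinv X n]

lemma upChain_eq {N k : ℕ} (R Rinv : RMat N) {A : Type _} [Ring A] [Algebra ℂ A]
    (X : Matrix (Fin N) (Fin N) A) (n : ℕ) : upChain k R Rinv X n
      = upP (cpy (fun i => liftC A (embR k R i)) (fun i => liftC A (embR k Rinv i)) (emb1 k X)) n := by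
  unfold upChain
  induction n with
  | zero => rfl
  | succ n ih =>
    rw [List.range_succ, List.map_append, List.prod_append, ih, upP]
    simp [copyX_eq]

lemma downChain_eq {N k : ℕ} (R Rinv : RMat N) {A : Type _} [Ring A] [Algebra ℂ A]
    (X : Matrix (Fin N) (Fin N) A) (n : ℕ) : downChain k R Rinv X n
      = dnP (cpy (fun i => liftC A (embR k R i)) (fun i => liftC A (embR k Rinv i)) (emb1 k X)) n := by
  unfold downChain
  induction n with
  | zero => rfl
  | succ n ih =>
    rw [List.range_succ, List.reverse_append, List.map_append, List.prod_append, ih, dnP]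
    simp [copyX_eq]

lemma capChainA_eq {N k : ℕ} (R Rinv : RMat N) {q : ℂ} (hq : q ≠ 0) (hqq : q - q⁻¹ ≠ 0)
    {A : Type _} [Ring A] [Algebra ℂ A]
    (X : Matrix (Fin N) (Fin N) A) (n : ℕ) : capChainA k R Rinv q X n
      = capP q (cpy (fun i => liftC A (embR k R i)) (fun i => liftC A (embR k Rinv i)) (emb1 k X)) n := by
  unfold capChainA
  induction n with
  | zero => rfl
  | succ n ih =>
    rw [List.range_succ, List.map_append, List.prod_append, ih, capP]
    simp [copyX_eq, cc_eq hq hqq]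

lemma asP_CT {N k : ℕ} {R Rb Ψ : RMat N} (q : ℂ) (h1 : R * Rb = 1) (h2 : Rb * R = 1)
    (hbr : IsBraiding R) (hΨ : SkewInv R Ψ) :
    ∀ n, Commute (CT k (Cmat Ψ)) (asP (embR k R) q n)
  | 0 => Commute.one_right _
  | 1 => Commute.one_right _
  | n + 2 => by
    have c := asP_CT (k := k) q h1 h2 hbr hΨ (n + 1)
    have c2 : Commute (CT k (Cmat Ψ)) (embR k R n) := by
      by_cases h : n + 1 < k
      · rw [embR_in n h]
        exact CT_comm _ _ _ (CC_comm h1 h2 hbr hΨ)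
      · rw [embR_out n h]; exact Commute.one_right _
    rw [asP]
    refine Commute.smul_right ?_ _
    refine (c.mul_right ?_).mul_right c
    exact ((Commute.one_right _).smul_right _).sub_right (c2.smul_right _)

lemma rTr_smul {N k : ℕ} {A : Type _} [Ring A] [Algebra ℂ A] (C : Matrix (Fin N) (Fin N) ℂ)
    (c : ℂ) (X : TMat N k A) : rTr C (c • X) = c • rTr C X := by
  simp only [rTr, Matrix.smul_apply, Finset.smul_sum]
  refine Finset.sum_congr rfl fun i _ => Finset.sum_congr rfl fun j _ => smul_comm _ _ _

lemma rTr_idem {N k : ℕ} {A : Type _} [Ring A] [Algebra ℂ A] (C : Matrix (Fin N) (Fin N) ℂ)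
    (Y : TMat N k ℂ) (hY : Commute (CT k C) Y) (hi : Y * Y = Y) (X : TMat N k A) :
    rTr C (liftC A Y * X) = rTr C (liftC A Y * X * liftC A Y) := by
  rw [rTr_cyc C Y hY, ← mul_assoc, ← liftC_mul, hi]

end Fin

/-- generalized quantum Capelli identity, skew-symmetric form:
`⟨A^(k) L_{1̄}(L_{2̄}+qI)⋯(L_{k̄}+q^{k−1}(k−1)_q I)⟩_{1…k}
  = q^{k(k−1)} ⟨A^(k) M_{1̄}⋯M_{k̄} D_{k̄}⋯D_{1̄}⟩_{1…k}`, with `L = MD`. -/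
theorem statement4 {N : ℕ} (R Rinv Ψ : RMat N) (q : ℂ)
    (hq0 : q ≠ 0) (hq1 : q ≠ 1) (hqm1 : q ≠ -1)
    (hinv : R * Rinv = 1) (hinv' : Rinv * R = 1)
    (hbr : IsBraiding R) (hH : HeckeCond R q) (hΨ : SkewInv R Ψ)
    {A : Type _} [Ring A] [Algebra ℂ A]
    (M D : Matrix (Fin N) (Fin N) A)
    (hRE : RERel R M) (hDD : DDRel Rinv D) (hperm : PermRel R Rinv M D) :
    ∀ k : ℕ, 1 ≤ k → (∀ j : ℕ, 2 ≤ j → j ≤ k → qNum q j ≠ 0) →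
      rTr (Cmat Ψ) (liftC A (Asym k R q k) * capChainA k R Rinv q (M * D) k)
        = (q ^ (k * (k - 1))) •
            rTr (Cmat Ψ)
              (liftC A (Asym k R q k) * upChain k R Rinv M k * downChain k R Rinv D k) := by

  intro k hk hj
  have hqq : q - q⁻¹ ≠ 0 := by
    intro h
    have h2 : q * q = 1 := by
      have : q = q⁻¹ := sub_eq_zero.mp h
      calc q * q = q * q⁻¹ := by rw [← this]
        _ = 1 := mul_inv_cancel₀ hq0
    rcases mul_self_eq_one_iff.mp h2 with h | h
    · exact hq1 h
    · exact hqm1 h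
  rw [capChainA_eq R Rinv hq0 hqq, upChain_eq, downChain_eq, emb1_mul hk]
  rcases Nat.lt_or_ge 1 k with hk2 | hk2
  swap
  · obtain rfl : k = 1 := by omega
    simp [capP, upP, dnP, cpy, cc, Asym, liftC_one]
  have b0 : BrData (embR k R) (embR k Rinv) (k - 1) :=
    ⟨fun i => embR_inv i hinv, fun i => embR_inv i hinv', fun i hi => embR_braid i (by omega) hbr,
      fun i j hij => embR_far i j hij R R⟩
  have b1 : BrData (fun i => liftC A (embR k R i)) (fun i => liftC A (embR k Rinv i)) (k - 1) := by
    refine ⟨fun i => ?_, fun i => ?_, fun i hi => ?_, fun i j hij => ?_⟩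
    · show liftC A (embR k R i) * liftC A (embR k Rinv i) = 1
      rw [← liftC_mul, b0.h1, liftC_one]
    · show liftC A (embR k Rinv i) * liftC A (embR k R i) = 1
      rw [← liftC_mul, b0.h2, liftC_one]
    · simp only [← liftC_mul]
      rw [b0.br i hi]
    · show liftC A (embR k R i) * liftC A (embR k R j) = liftC A (embR k R j) * liftC A (embR k R i)
      rw [← liftC_mul, ← liftC_mul, (b0.far i j hij).eq]
  have eR : ∀ S : RMat N, liftC A (embR k S 0) = embG (posE 2 k 0 (by omega)) (liftC A (embR 2 S 0)) := by
    intro S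
    rw [embR_in 0 (by omega), embG_lift]
  have e1 : ∀ X : Matrix (Fin N) (Fin N) A, emb1 k X = embG (posE 2 k 0 (by omega)) (emb1 2 X) :=
    fun X => emb1_pos (by omega) (by omega) X
  obtain ⟨aL, aR, aI, -⟩ := asP_main b0 hq0 hqq (fun i hi => embR_hecke i (by omega) hq0 hH) k
    (by omega) hj
  have aC := asP_CT (k := k) q hinv hinv' hbr hΨ k
  have key := capelli_abs b1 hq0 (m := emb1 k M) (d := emb1 k D)
    (fun i hi => embR_emb1 i hi R M) (fun i hi => embR_emb1 i hi R D)
    (by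
      have h := congrArg (embG (posE 2 k 0 (by omega))) hRE
      simp only [embG_mul] at h
      simp only [eR, e1]
      exact h)
    (by
      have h := congrArg (embG (posE 2 k 0 (by omega))) hDD
      simp only [embG_mul] at h
      simp only [eR, e1]
      exact h)
    (by
      have h := congrArg (embG (posE 2 k 0 (by omega))) hperm
      simp only [embG_mul, embG_add, embG_one] at h
      simp only [eR, e1]
      exact h)
    k (by omega) (liftC A (asP (embR k R) q k)) (liftC A (asP (embR k R) q k))
    (fun i hi => by
      show liftC A (asP (embR k R) q k) * liftC A (embR k R i) = _
      rw [← liftC_mul, aR i hi, liftC_smul])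
    (fun i hi => by
      show liftC A (embR k R i) * liftC A (asP (embR k R) q k) = _
      rw [← liftC_mul, aL i hi, liftC_smul])
  rw [Asym_eq, rTr_idem _ _ aC aI, key, rTr_smul, mul_assoc (liftC A (asP (embR k R) q k)) (upP _ _),
    ← rTr_idem _ _ aC aI]
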